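/- arXiv:2509.24583 — 4 statements merged into one kernel-verified Lean document; each statement's English description precedes it below -/
import Mathlib

section
/- For every modal μ-calculus formula φ over signature σ and all n, d ∈ ℕ, the following are equivalent: (1) φ and ¬φ are joint ≈^n_σ-consistent over T^d; (2) φ and ¬φ are joint ≅^n_σ-consistent over T^d (i.e., there exist M, M' ∈ T^d with M ⊨ φ, M' ⊨ ¬φ and M ≅^n_σ M'). -/
/-- Formulae of the modal μ-calculus (in negation normal form). -/
inductive Form : Type
  | pos : ℕ → Form
  | neg : ℕ → Form
  | or  : Form → Form → Form
  | and : Form → Form → Form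
  | dia : Form → Form
  | box : Form → Form
  | var : ℕ → Form
  | mu  : ℕ → Form → Form
  | nu  : ℕ → Form → Form

namespace Form

/-- Fixpoint-free formulae: modal logic ML. -/
def IsML : Form → Prop
  | pos _ => True
  | neg _ => True
  | or φ ψ => IsML φ ∧ IsML ψ
  | and φ ψ => IsML φ ∧ IsML ψ
  | dia φ => IsML φ
  | box φ => IsML φ
  | var _ => False
  | mu _ _ => False
  | nu _ _ => False

/-- Modal depth: maximal nesting of ◇ and □. -/
def depth : Form → ℕ
  | pos _ => 0
  | neg _ => 0
  | or φ ψ => max φ.depth ψ.depth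
  | and φ ψ => max φ.depth ψ.depth
  | dia φ => φ.depth + 1
  | box φ => φ.depth + 1
  | var _ => 0
  | mu _ φ => φ.depth
  | nu _ φ => φ.depth

/-- The set of propositions occurring in a formula. -/
def sig : Form → Set ℕ
  | pos p => {p}
  | neg p => {p}
  | or φ ψ => φ.sig ∪ ψ.sig
  | and φ ψ => φ.sig ∪ ψ.sig
  | dia φ => φ.sig
  | box φ => φ.sig
  | var _ => ∅
  | mu _ φ => φ.sig
  | nu _ φ => φ.sig

/-- The size of a formula (its length as a string, up to a constant factor). -/
def size : Form → ℕ
  | pos _ => 1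
  | neg _ => 2
  | or φ ψ => φ.size + ψ.size + 1
  | and φ ψ => φ.size + ψ.size + 1
  | dia φ => φ.size + 1
  | box φ => φ.size + 1
  | var _ => 1
  | mu _ φ => φ.size + 2
  | nu _ φ => φ.size + 2

end Form

/-- A set has at least `g` elements. -/
def AtLeastCard {W : Type} (g : ℕ) (S : Set W) : Prop :=
  ∃ f : Fin g → W, Function.Injective f ∧ ∀ i, f i ∈ S

/-- Pointed Kripke structures. -/
structure Model : Type 1 where
  W : Type
  root : W
  R : W → W → Prop
  val : W → ℕ → Prop

namespace Model

/-- Semantics of the μ-calculus, via Knaster–Tarski style clauses. -/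
def interp (M : Model) : Form → (ℕ → Set M.W) → Set M.W
  | .pos p, _ => {w | M.val w p}
  | .neg p, _ => {w | ¬ M.val w p}
  | .or φ ψ, e => M.interp φ e ∪ M.interp ψ e
  | .and φ ψ, e => M.interp φ e ∩ M.interp ψ e
  | .dia φ, e => {w | ∃ v, M.R w v ∧ v ∈ M.interp φ e}
  | .box φ, e => {w | ∀ v, M.R w v → v ∈ M.interp φ e}
  | .var x, e => e x
  | .mu x φ, e => sInf {S : Set M.W | M.interp φ (Function.update e x S) ⊆ S}
  | .nu x φ, e => sSup {S : Set M.W | S ⊆ M.interp φ (Function.update e x S)}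

/-- `M ⊨ φ`: the root of `M` satisfies `φ`. -/
def Sat (M : Model) (φ : Form) : Prop := M.root ∈ M.interp φ fun _ => ∅

/-- Points reachable from the root in exactly `k` steps (in a tree: points of depth `k`). -/
def stepsTo (M : Model) : ℕ → M.W → Prop
  | 0, w => w = M.root
  | (k+1), w => ∃ v, M.stepsTo k v ∧ M.R v w

/-- Membership in the `n`-prefix: depth at most `n`. -/
def InPrefix (M : Model) (n : ℕ) (w : M.W) : Prop := ∃ k ≤ n, M.stepsTo k w

/-- Tree models: every point is reachable from the root, the root has no predecessor,
and every point has at most one predecessor. -/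
def IsTree (M : Model) : Prop :=
  (∀ w, Relation.ReflTransGen M.R M.root w) ∧
  (∀ w, ¬ M.R w M.root) ∧
  (∀ w v v', M.R v w → M.R v' w → v = v')

/-- Outdegree at most `d`. -/
def outdegLE (M : Model) (d : ℕ) : Prop :=
  ∀ w, ¬ AtLeastCard (d+1) {v | M.R w v}

end Model

/-- The class `T^d` of all tree models of outdegree at most `d`. -/
def TreeC (d : ℕ) : Set Model := {M | M.IsTree ∧ M.outdegLE d}

/-- `(σ,n)`-bisimulations: bisimulations between the `n`-prefixes of the `σ`-reducts,
relating only points of equal depth and linking the roots. -/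
structure IsNBisim (M M' : Model) (σ : Set ℕ) (n : ℕ) (Z : M.W → M'.W → Prop) : Prop where
  root : Z M.root M'.root
  depthEq : ∀ ⦃w w'⦄, Z w w' → ∃ k ≤ n, M.stepsTo k w ∧ M'.stepsTo k w'
  base : ∀ ⦃w w'⦄, Z w w' → ∀ p ∈ σ, (M.val w p ↔ M'.val w' p)
  forth : ∀ ⦃w w'⦄, Z w w' → ∀ k, k < n → M.stepsTo k w →
      ∀ v, M.R w v → ∃ v', M'.R w' v' ∧ Z v v'
  back : ∀ ⦃w w'⦄, Z w w' → ∀ k, k < n → M'.stepsTo k w' →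
      ∀ v', M'.R w' v' → ∃ v, M.R w v ∧ Z v v'

/-- `(σ,n)`-isomorphisms: `(σ,n)`-bisimulations bijective on the `n`-prefixes. -/
def IsNIso (M M' : Model) (σ : Set ℕ) (n : ℕ) (Z : M.W → M'.W → Prop) : Prop :=
  IsNBisim M M' σ n Z ∧
  (∀ w w₁' w₂', Z w w₁' → Z w w₂' → w₁' = w₂') ∧
  (∀ w₁ w₂ w', Z w₁ w' → Z w₂ w' → w₁ = w₂) ∧
  (∀ w, M.InPrefix n w → ∃ w', Z w w') ∧
  (∀ w', M'.InPrefix n w' → ∃ w, Z w w')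

/-- `M ≈ⁿ_σ M'`. -/
def NBisimEq (M M' : Model) (σ : Set ℕ) (n : ℕ) : Prop := ∃ Z, IsNBisim M M' σ n Z

/-- `M ≅ⁿ_σ M'`. -/
def NIsoEq (M M' : Model) (σ : Set ℕ) (n : ℕ) : Prop := ∃ Z, IsNIso M M' σ n Z

/-- `ψ` separates `φ` from `φ'` over the class `C`: `φ ⊨ ψ` and `ψ ⊨ ¬φ'` over `C`. -/
def Separates (C : Set Model) (ψ φ φ' : Form) : Prop :=
  (∀ M ∈ C, M.Sat φ → M.Sat ψ) ∧ (∀ M ∈ C, M.Sat ψ → ¬ M.Sat φ')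

/-!
Truncating a tree at depth `n` does not change its `n`-prefix, and it turns every
`(σ,n)`-bisimulation into a bisimulation of the whole truncated trees. Hence `M ≈ⁿ_σ M'` yields a
chain `M ≅ⁿ_σ M|ₙ ∼_σ M'|ₙ ≅ⁿ_σ M'`. A formula over `σ` cannot change its truth value at the middle
link, so if it does so between `M` and `M'`, it does so at one of the outer links.
-/

section RelMapsTo

variable {α β ι : Type*} {Z : α → β → Prop}

/-- The relational analogue of `Set.MapsTo`: every point related by `Z` to a point of `S` lies
in `S'`. Truth-preservation along `Z` is stated through it. -/
def RelMapsTo (Z : α → β → Prop) (S : Set α) (S' : Set β) : Prop :=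
  ∀ ⦃a b⦄, Z a b → a ∈ S → b ∈ S'

theorem RelMapsTo.update [DecidableEq ι] {e : ι → Set α} {e' : ι → Set β} {S : Set α} {S' : Set β}
    (he : ∀ x, RelMapsTo Z (e x) (e' x)) (hS : RelMapsTo Z S S') (x y : ι) :
    RelMapsTo Z (Function.update e x S y) (Function.update e' x S' y) := by
  simp only [Function.update_apply]
  split_ifs
  exacts [hS, he y]

variable {F : Set α → Set α} {F' : Set β → Set β}

theorem RelMapsTo.lfp
    (hF : ∀ S S', RelMapsTo Z S S' → RelMapsTo Z (F S) (F' S')) :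
    RelMapsTo Z (sInf {S | F S ⊆ S}) (sInf {S' | F' S' ⊆ S'}) := by
  intro a b hab ha S' hS'
  let core : Set α := {u | ∀ u', Z u u' → u' ∈ S'}
  have hcore : RelMapsTo Z core S' := fun u u' huu' hu => hu u' huu'
  have hclosed : F core ⊆ core := fun u hu u' huu' => hS' (hF core S' hcore huu' hu)
  exact ha core hclosed b hab

theorem RelMapsTo.gfp
    (hF : ∀ S S', RelMapsTo Z S S' → RelMapsTo Z (F S) (F' S')) :
    RelMapsTo Z (sSup {S | S ⊆ F S}) (sSup {S' | S' ⊆ F' S'}) := by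
  rintro a b hab ⟨S, hS, ha⟩
  let image : Set β := {u' | ∃ u ∈ S, Z u u'}
  have himage : RelMapsTo Z S image := fun u u' huu' hu => ⟨u, hu, huu'⟩
  have hclosed : image ⊆ F' image := fun u' ⟨u, hu, huu'⟩ => hF S image himage huu' (hS hu)
  exact ⟨image, hclosed, a, ha, hab⟩

end RelMapsTo

/-- Bisimulations between the `σ`-reducts of two models, without bound on the depth. Neither is
the relation required to link the roots. -/
structure IsBisim (M M' : Model) (σ : Set ℕ) (Z : M.W → M'.W → Prop) : Prop where
  base : ∀ ⦃w w'⦄, Z w w' → ∀ p ∈ σ, (M.val w p ↔ M'.val w' p)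
  forth : ∀ ⦃w w'⦄, Z w w' → ∀ v, M.R w v → ∃ v', M'.R w' v' ∧ Z v v'
  back : ∀ ⦃w w'⦄, Z w w' → ∀ v', M'.R w' v' → ∃ v, M.R w v ∧ Z v v'

section Truncation

variable {M M' : Model} {σ : Set ℕ} {n d k : ℕ} {Z : M.W → M'.W → Prop} {φ : Form}

namespace IsBisim

theorem symm (hZ : IsBisim M M' σ Z) : IsBisim M' M σ (flip Z) where
  base _ _ h p hp := (hZ.base h p hp).symm
  forth _ _ h := hZ.back h
  back _ _ h := hZ.forth h

theorem relMapsTo_interp (hZ : IsBisim M M' σ Z) (hsig : φ.sig ⊆ σ)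
    {e : ℕ → Set M.W} {e' : ℕ → Set M'.W} (he : ∀ x, RelMapsTo Z (e x) (e' x)) :
    RelMapsTo Z (M.interp φ e) (M'.interp φ e') := by
  induction φ generalizing e e' with
  | pos p => exact fun _ _ h => (hZ.base h p (hsig rfl)).mp
  | neg p => exact fun _ _ h => mt (hZ.base h p (hsig rfl)).mpr
  | or φ ψ ihφ ihψ =>
    obtain ⟨hφ, hψ⟩ := Set.union_subset_iff.mp hsig
    exact fun _ _ h => Or.imp (ihφ hφ he h) (ihψ hψ he h)
  | and φ ψ ihφ ihψ =>
    obtain ⟨hφ, hψ⟩ := Set.union_subset_iff.mp hsig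
    exact fun _ _ h => And.imp (ihφ hφ he h) (ihψ hψ he h)
  | dia φ ih =>
    rintro w w' h ⟨v, hwv, hv⟩
    obtain ⟨v', hwv', hvv'⟩ := hZ.forth h v hwv
    exact ⟨v', hwv', ih hsig he hvv' hv⟩
  | box φ ih =>
    intro w w' h hw v' hwv'
    obtain ⟨v, hwv, hvv'⟩ := hZ.back h v' hwv'
    exact ih hsig he hvv' (hw v hwv)
  | var x => exact he x
  | mu x φ ih => exact .lfp fun _ _ hS => ih hsig (.update he hS x)
  | nu x φ ih => exact .gfp fun _ _ hS => ih hsig (.update he hS x)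

theorem sat_iff (hZ : IsBisim M M' σ Z) (hroot : Z M.root M'.root) (hsig : φ.sig ⊆ σ) :
    M.Sat φ ↔ M'.Sat φ :=
  ⟨hZ.relMapsTo_interp hsig (fun _ _ _ _ => False.elim) hroot,
    hZ.symm.relMapsTo_interp hsig (fun _ _ _ _ => False.elim) hroot⟩

end IsBisim

theorem IsNBisim.symm (hZ : IsNBisim M M' σ n Z) : IsNBisim M' M σ n (flip Z) where
  root := hZ.root
  depthEq _ _ h := (hZ.depthEq h).imp fun _ ⟨hk, hw, hw'⟩ => ⟨hk, hw', hw⟩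
  base _ _ h p hp := (hZ.base h p hp).symm
  forth _ _ h := hZ.back h
  back _ _ h := hZ.forth h

theorem IsNBisim.inPrefix_right (hZ : IsNBisim M M' σ n Z) {w : M.W} {w' : M'.W} (h : Z w w') :
    M'.InPrefix n w' :=
  (hZ.depthEq h).imp fun _ ⟨hk, _, hw'⟩ => ⟨hk, hw'⟩

theorem IsNIso.symm (hZ : IsNIso M M' σ n Z) : IsNIso M' M σ n (flip Z) :=
  let ⟨hbisim, hfun, hinj, htotal, hsurj⟩ := hZ
  ⟨hbisim.symm, fun w' w₁ w₂ => hinj w₁ w₂ w', fun w₁' w₂' w => hfun w w₁' w₂', hsurj, htotal⟩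

theorem NIsoEq.symm : NIsoEq M M' σ n → NIsoEq M' M σ n
  | ⟨_, hZ⟩ => ⟨_, hZ.symm⟩

theorem NIsoEq.nBisimEq : NIsoEq M M' σ n → NBisimEq M M' σ n
  | ⟨Z, hZ⟩ => ⟨Z, hZ.1⟩

namespace Model

theorem reflTransGen_of_stepsTo {w : M.W} (h : M.stepsTo k w) :
    Relation.ReflTransGen M.R M.root w := by
  induction k generalizing w with
  | zero => exact h ▸ .refl
  | succ k ih =>
    obtain ⟨v, hv, hvw⟩ := h
    exact (ih hv).tail hvw

theorem IsTree.exists_stepsTo_lt (hM : M.IsTree) {w v : M.W} (hwv : M.R w v)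
    (hv : M.InPrefix n v) : ∃ k < n, M.stepsTo k w := by
  obtain ⟨_ | k, hk, hv⟩ := hv
  · obtain rfl : v = M.root := hv
    exact absurd hwv (hM.2.1 w)
  · obtain ⟨u, hu, huv⟩ := hv
    obtain rfl : w = u := hM.2.2 v w u hwv huv
    exact ⟨k, hk, hu⟩

/-- The restriction of a model to its `n`-prefix, as a model of its own. -/
def truncate (M : Model) (n : ℕ) : Model where
  W := {w // M.InPrefix n w}
  root := ⟨M.root, 0, n.zero_le, rfl⟩
  R w v := M.R w.1 v.1
  val w := M.val w.1

theorem stepsTo_truncate {w : (M.truncate n).W} (hk : k ≤ n) (hw : M.stepsTo k w.1) :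
    (M.truncate n).stepsTo k w := by
  induction k generalizing w with
  | zero => exact Subtype.ext hw
  | succ k ih =>
    obtain ⟨v, hv, hvw⟩ := hw
    have hkn : k ≤ n := Nat.le_of_succ_le hk
    exact ⟨⟨v, k, hkn, hv⟩, ih hkn hv, hvw⟩

theorem IsTree.truncate (hM : M.IsTree) (n : ℕ) : (M.truncate n).IsTree :=
  ⟨fun ⟨_, _, hk, hw⟩ => reflTransGen_of_stepsTo (stepsTo_truncate hk hw),
    fun w => hM.2.1 w.1,
    fun _ _ _ hvw hvw' => Subtype.ext (hM.2.2 _ _ _ hvw hvw')⟩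

theorem outdegLE.truncate (hM : M.outdegLE d) (n : ℕ) : (M.truncate n).outdegLE d :=
  fun w ⟨f, hf, hwf⟩ => hM w.1 ⟨fun i => (f i).1, Subtype.val_injective.comp hf, hwf⟩

theorem truncate_mem_treeC (hM : M ∈ TreeC d) (n : ℕ) : M.truncate n ∈ TreeC d :=
  ⟨hM.1.truncate n, hM.2.truncate n⟩

theorem isNBisim_truncate (M : Model) (σ : Set ℕ) (n : ℕ) :
    IsNBisim M (M.truncate n) σ n fun w v => w = v.1 where
  root := rfl
  depthEq := by
    rintro _ v rfl
    obtain ⟨k, hk, hv⟩ := v.2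
    exact ⟨k, hk, hv, stepsTo_truncate hk hv⟩
  base := by
    rintro _ v rfl p -
    rfl
  forth := by
    rintro _ w rfl k hk hw v hwv
    exact ⟨⟨v, k + 1, hk, w.1, hw, hwv⟩, hwv, rfl⟩
  back := by
    rintro _ w rfl k - - v hwv
    exact ⟨v.1, hwv, rfl⟩

theorem nIsoEq_truncate (M : Model) (σ : Set ℕ) (n : ℕ) : NIsoEq M (M.truncate n) σ n :=
  ⟨_, M.isNBisim_truncate σ n,
    fun _ _ _ h h' => Subtype.ext (h.symm.trans h'),
    fun _ _ _ h h' => h.trans h'.symm,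
    fun w hw => ⟨⟨w, hw⟩, rfl⟩,
    fun v _ => ⟨v.1, rfl⟩⟩

end Model

theorem IsNBisim.forth_truncate (hZ : IsNBisim M M' σ n Z) (hM : M.IsTree)
    {w v : (M.truncate n).W} {w' : (M'.truncate n).W} (h : Z w.1 w'.1)
    (hwv : (M.truncate n).R w v) :
    ∃ v' : (M'.truncate n).W, (M'.truncate n).R w' v' ∧ Z v.1 v'.1 := by
  obtain ⟨k, hk, hw⟩ := hM.exists_stepsTo_lt hwv v.2
  obtain ⟨v', hwv', hvv'⟩ := hZ.forth h k hk hw v.1 hwv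
  exact ⟨⟨v', hZ.inPrefix_right hvv'⟩, hwv', hvv'⟩

theorem IsNBisim.isBisim_truncate (hZ : IsNBisim M M' σ n Z) (hM : M.IsTree) (hM' : M'.IsTree) :
    IsBisim (M.truncate n) (M'.truncate n) σ fun w w' => Z w.1 w'.1 where
  base _ _ h := hZ.base h
  forth _ _ h _ hwv := hZ.forth_truncate hM h hwv
  back _ _ h _ hwv' := hZ.symm.forth_truncate hM' h hwv'

theorem NBisimEq.sat_truncate_iff (h : NBisimEq M M' σ n) (hM : M.IsTree) (hM' : M'.IsTree)
    (hsig : φ.sig ⊆ σ) : (M.truncate n).Sat φ ↔ (M'.truncate n).Sat φ :=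
  let ⟨_, hZ⟩ := h
  (hZ.isBisim_truncate hM hM').sat_iff hZ.root hsig

theorem stmt_2_general {C : Set Model} (hTree : ∀ M ∈ C, M.IsTree)
    (hTrunc : ∀ M ∈ C, M.truncate n ∈ C) (hsig : φ.sig ⊆ σ) :
    (∃ M ∈ C, ∃ M' ∈ C, M.Sat φ ∧ ¬ M'.Sat φ ∧ NBisimEq M M' σ n) ↔
    (∃ M ∈ C, ∃ M' ∈ C, M.Sat φ ∧ ¬ M'.Sat φ ∧ NIsoEq M M' σ n) := by
  constructor
  · rintro ⟨M, hM, M', hM', hφ, hφ', hMM'⟩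
    by_cases hMn : (M.truncate n).Sat φ
    · have hMn' : (M'.truncate n).Sat φ :=
        (hMM'.sat_truncate_iff (hTree M hM) (hTree M' hM') hsig).mp hMn
      exact ⟨_, hTrunc M' hM', M', hM', hMn', hφ', (M'.nIsoEq_truncate σ n).symm⟩
    · exact ⟨M, hM, _, hTrunc M hM, hφ, hMn, M.nIsoEq_truncate σ n⟩
  · rintro ⟨M, hM, M', hM', hφ, hφ', hMM'⟩
    exact ⟨M, hM, M', hM', hφ, hφ', hMM'.nBisimEq⟩

end Truncation

/-- Otto's lemma: joint `≈ⁿ_σ`-consistency of `φ, ¬φ` over `T^d` coincides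
with joint `≅ⁿ_σ`-consistency. -/
theorem stmt_2 (φ : Form) (σ : Set ℕ) (hσ : σ.Finite) (hsig : φ.sig ⊆ σ) (n d : ℕ) :
    (∃ M ∈ TreeC d, ∃ M' ∈ TreeC d, M.Sat φ ∧ ¬ M'.Sat φ ∧ NBisimEq M M' σ n) ↔
    (∃ M ∈ TreeC d, ∃ M' ∈ TreeC d, M.Sat φ ∧ ¬ M'.Sat φ ∧ NIsoEq M M' σ n) :=
  stmt_2_general (fun _ hM => hM.1) (fun _ hM => Model.truncate_mem_treeC hM n) hsig
end

section
/- For all modal μ-calculus formulae φ, φ' over signature σ and every n ∈ ℕ, the following are equivalent: (1) φ and φ' are joint ≈^n_σ-consistent over the class of all models; (2) φ and φ' are joint ≅^n_σ-consistent over T^d, where d = |φ| + |φ'| (the sum of the sizes of φ and φ' as strings). -/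
/-!
Memoryless determinacy gives a positional strategy for `φ` that keeps at most one successor for
each `◇` in `φ`. It is built by recursion on `φ`, uniformly for a well-ordered increasing family of
environments: at `◇` one commits to a witness for the least environment that has one, and at `μ` the
index is refined lexicographically by the ordinal stages of the fixpoint, so that unfolding lowers
the index.

Given a bisimulation, pair each successor kept by one strategy with a bisimilar partner in the other
model. Down to depth `n` both trees unfold these common pairs, and below that each tree unfolds its
own strategy.
-/

open Function Set

universe u

section LfpStage

variable {α β ι : Type*} [CompleteLattice α] [CompleteLattice β] [LinearOrder ι] [WellFoundedLT ι]

/-- Stages of the least fixpoints of a family `f` of monotone maps, indexed lexicographically: stage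
`(i, a)` joins the values of `f j` at stage `(j, b)` over all `(j, b) < (i, a)`. In contrast to
`OrdinalApprox.lfpApprox`, the stages of all the maps form a single increasing family. -/
noncomputable def lfpStage (f : ι → α →o α) : ι ×ₗ Ordinal.{u} → α :=
  WellFoundedLT.fix fun p stage => ⨆ (q : ι ×ₗ Ordinal.{u}) (hq : q < p), f (ofLex q).1 (stage q hq)

theorem lfpStage_eq_iSup (f : ι → α →o α) (p : ι ×ₗ Ordinal.{u}) :
    lfpStage f p = ⨆ q < p, f (ofLex q).1 (lfpStage f q) := by
  rw [lfpStage, WellFoundedLT.fix_eq]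

theorem monotone_lfpStage (f : ι → α →o α) : Monotone (lfpStage.{u} f) := by
  intro p q hpq
  rw [lfpStage_eq_iSup f p, lfpStage_eq_iSup f q]
  exact biSup_mono fun r hr => hr.trans_le hpq

theorem map_lfpStage_le_lfp {f : ι → α →o α} {g : ι → β →o β} (hg : Monotone g) (h : sSupHom α β)
    (hfg : ∀ p : ι ×ₗ Ordinal.{u},
      h (f (ofLex p).1 (lfpStage f p)) ≤ g (ofLex p).1 (h (lfpStage f p)))
    (p : ι ×ₗ Ordinal.{u}) : h (lfpStage f p) ≤ (g (ofLex p).1).lfp := by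
  induction p using WellFoundedLT.induction with
  | ind p ih =>
    rw [lfpStage_eq_iSup, map_iSup₂]
    refine iSup₂_le fun q hq => ?_
    calc
      h (f (ofLex q).1 (lfpStage f q)) ≤ g (ofLex q).1 (h (lfpStage f q)) := hfg q
      _ ≤ g (ofLex q).1 (g (ofLex q).1).lfp := (g _).monotone (ih q hq)
      _ = (g (ofLex q).1).lfp := (g _).map_lfp
      _ ≤ (g (ofLex p).1).lfp := OrderHom.lfp.monotone (hg (Prod.Lex.monotone_fst _ _ hq.le))

end LfpStage

theorem exists_lfp_le_lfpStage {α : Type u} {ι : Type*} [CompleteLattice α] [LinearOrder ι]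
    [WellFoundedLT ι] (f : ι → α →o α) (i : ι) :
    ∃ a : Ordinal.{u}, (f i).lfp ≤ lfpStage f (toLex (i, a)) := by
  obtain ⟨a, b, hab, hlt⟩ : ∃ a b : Ordinal.{u},
      lfpStage f (toLex (i, a)) = lfpStage f (toLex (i, b)) ∧ a < b := by
    by_contra! h
    exact not_injective_of_ordinal (fun a : Ordinal.{u} => lfpStage f (toLex (i, a)))
      fun a b hab => (h b a hab.symm).antisymm (h a b hab)
  refine ⟨a, OrderHom.lfp_le _ ?_⟩
  conv_rhs => rw [hab, lfpStage_eq_iSup]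
  exact le_iSup₂_of_le (toLex (i, a)) (Prod.Lex.toLex_lt_toLex.2 (.inr ⟨rfl, hlt⟩)) le_rfl

theorem exists_subsingleton_inter_nonempty_of_monotone {α ι : Type*} [LinearOrder ι]
    [WellFoundedLT ι] {S : ι → Set α} (hS : Monotone S) (T : Set α) :
    ∃ D ⊆ T, D.Subsingleton ∧ ∀ i, (T ∩ S i).Nonempty → (D ∩ S i).Nonempty := by
  by_cases h : {i | (T ∩ S i).Nonempty}.Nonempty
  · obtain ⟨i, ⟨v, hvT, hvS⟩, hmin⟩ := wellFounded_lt.has_min _ h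
    exact ⟨{v}, singleton_subset_iff.2 hvT, subsingleton_singleton,
      fun j hj => ⟨v, rfl, hS (not_lt.1 (hmin j hj)) hvS⟩⟩
  · exact ⟨∅, empty_subset T, subsingleton_empty, fun i hi => (h ⟨i, hi⟩).elim⟩

theorem exists_matching {α β : Type*} {r : α → β → Prop} {S : Set α} {T : Set β}
    (hS : ∀ a ∈ S, ∃ b, r a b) (hT : ∀ b ∈ T, ∃ a, r a b) :
    ∃ B : Set (α × β), (∀ p ∈ B, r p.1 p.2) ∧ S ⊆ Prod.fst '' B ∧ T ⊆ Prod.snd '' B ∧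
      B.encard ≤ S.encard + T.encard := by
  choose f hf using fun a : S => hS a a.2
  choose g hg using fun b : T => hT b b.2
  refine ⟨(fun a : S => (a.1, f a)) '' univ ∪ (fun b : T => (g b, b.1)) '' univ, ?_, ?_, ?_, ?_⟩
  · rintro _ (⟨a, -, rfl⟩ | ⟨b, -, rfl⟩)
    exacts [hf a, hg b]
  · exact fun a ha => ⟨_, .inl ⟨⟨a, ha⟩, mem_univ _, rfl⟩, rfl⟩
  · exact fun b hb => ⟨_, .inr ⟨⟨b, hb⟩, mem_univ _, rfl⟩, rfl⟩
  · exact (encard_union_le _ _).trans (add_le_add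
      ((encard_image_le _ _).trans_eq (encard_univ _))
      ((encard_image_le _ _).trans_eq (encard_univ _)))

theorem not_atLeastCard_of_encard_le {W : Type} {S : Set W} {d : ℕ} (h : S.encard ≤ d) :
    ¬ AtLeastCard (d + 1) S := by
  rintro ⟨f, hf, hfS⟩
  have hle : ENat.card (Fin (d + 1)) ≤ d :=
    hf.encard_range.trans ((encard_le_encard (range_subset_iff.2 hfS)).trans h)
  rw [ENat.card_eq_coe_fintype_card, Fintype.card_fin] at hle
  exact Nat.not_succ_le_self d (Nat.cast_le.1 hle)

/-- The number of occurrences of `◇`, which bounds the number of successors a strategy needs. -/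
def Form.numDia : Form → ℕ
  | pos _ => 0
  | neg _ => 0
  | or φ ψ => φ.numDia + ψ.numDia
  | and φ ψ => φ.numDia + ψ.numDia
  | dia φ => φ.numDia + 1
  | box φ => φ.numDia
  | var _ => 0
  | mu _ φ => φ.numDia
  | nu _ φ => φ.numDia

theorem Form.numDia_le_size (φ : Form) : φ.numDia ≤ φ.size := by
  induction φ <;> simp only [numDia, size] <;> omega

namespace Model

theorem monotone_interp (M : Model) (φ : Form) : Monotone (M.interp φ) := by
  induction φ with
  | pos p => exact monotone_const
  | neg p => exact monotone_const
  | or φ ψ ihφ ihψ => exact fun _ _ h => union_subset_union (ihφ h) (ihψ h)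
  | and φ ψ ihφ ihψ => exact fun _ _ h => inter_subset_inter (ihφ h) (ihψ h)
  | dia φ ih => exact fun _ _ h _ ⟨v, hv, hvφ⟩ => ⟨v, hv, ih h hvφ⟩
  | box φ ih => exact fun _ _ h _ hw v hv => ih h (hw v hv)
  | var x => exact fun _ _ h => h x
  | mu x φ ih =>
    exact fun _ _ h => sInf_le_sInf fun S hS =>
      (ih (update_le_update_iff.2 ⟨le_rfl, fun y _ => h y⟩)).trans hS
  | nu x φ ih =>
    exact fun _ _ h => sSup_le_sSup fun S hS =>
      hS.trans (ih (update_le_update_iff.2 ⟨le_rfl, fun y _ => h y⟩))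

/-- The monotone operator `S ↦ ⟦φ⟧(e[x ↦ S])` whose extremal fixpoints interpret `μx.φ` and
`νx.φ`. -/
def bodyHom (M : Model) (x : ℕ) (φ : Form) (e : ℕ → Set M.W) : Set M.W →o Set M.W where
  toFun S := M.interp φ (update e x S)
  monotone' _ _ h := M.monotone_interp φ (update_le_update_iff.2 ⟨h, fun _ _ => le_rfl⟩)

theorem monotone_bodyHom (M : Model) (x : ℕ) (φ : Form) : Monotone (M.bodyHom x φ) :=
  fun _ _ h _ => M.monotone_interp φ (update_le_update_iff.2 ⟨le_rfl, fun y _ => h y⟩)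

theorem interp_mu (M : Model) (x : ℕ) (φ : Form) (e : ℕ → Set M.W) :
    M.interp (.mu x φ) e = (M.bodyHom x φ e).lfp :=
  rfl

theorem interp_nu (M : Model) (x : ℕ) (φ : Form) (e : ℕ → Set M.W) :
    M.interp (.nu x φ) e = (M.bodyHom x φ e).gfp :=
  rfl

/-- `π` projects `N` to `M` preserving labels and transitions, and lifts those transitions of `M`
that are selected by the strategy `C`. If `C` selects all successors, `π` is a bounded morphism. -/
structure Follows (N M : Model) (C : M.W → Set M.W) (π : N.W → M.W) : Prop where
  val_iff : ∀ x p, N.val x p ↔ M.val (π x) p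
  forth : ∀ x y, N.R x y → M.R (π x) (π y)
  lift : ∀ x, ∀ v ∈ C (π x), ∃ y, N.R x y ∧ π y = v

theorem Follows.mono {N M : Model} {C D : M.W → Set M.W} {π : N.W → M.W} (h : Follows N M D π)
    (hCD : C ≤ D) : Follows N M C π :=
  ⟨h.val_iff, h.forth, fun x v hv => h.lift x v (hCD _ hv)⟩

/-- `C` is a positional strategy for `φ`, winning under all the environments `e i` simultaneously:
it selects few successors of each point, and every model following it preserves `φ`. -/
structure IsStrategy (M : Model) (φ : Form) {ι : Type*} (e : ι → ℕ → Set M.W)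
    (C : M.W → Set M.W) : Prop where
  encard_le : ∀ w, (C w).encard ≤ φ.numDia
  subset_succ : ∀ w, C w ⊆ {v | M.R w v}
  preserves : ∀ {N : Model} {π : N.W → M.W}, Follows N M C π → ∀ i,
    π ⁻¹' M.interp φ (e i) ⊆ N.interp φ (preimage π ∘ e i)

namespace IsStrategy

variable {M : Model} {φ ψ : Form} {C D : M.W → Set M.W}

section

variable {ι : Type*} {e : ι → ℕ → Set M.W}

theorem encard_sup_le (hC : M.IsStrategy φ e C) (hD : M.IsStrategy ψ e D) (w : M.W) :
    ((C ⊔ D) w).encard ≤ (φ.numDia + ψ.numDia : ℕ) := by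
  push_cast
  exact (encard_union_le _ _).trans (add_le_add (hC.encard_le w) (hD.encard_le w))

theorem or (hC : M.IsStrategy φ e C) (hD : M.IsStrategy ψ e D) :
    M.IsStrategy (.or φ ψ) e (C ⊔ D) where
  encard_le := hC.encard_sup_le hD
  subset_succ w := union_subset (hC.subset_succ w) (hD.subset_succ w)
  preserves h i := union_subset_union (hC.preserves (h.mono le_sup_left) i)
    (hD.preserves (h.mono le_sup_right) i)

theorem and (hC : M.IsStrategy φ e C) (hD : M.IsStrategy ψ e D) :
    M.IsStrategy (.and φ ψ) e (C ⊔ D) where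
  encard_le := hC.encard_sup_le hD
  subset_succ w := union_subset (hC.subset_succ w) (hD.subset_succ w)
  preserves h i := inter_subset_inter (hC.preserves (h.mono le_sup_left) i)
    (hD.preserves (h.mono le_sup_right) i)

theorem dia (hC : M.IsStrategy φ e C) (hD_succ : ∀ w, D w ⊆ {v | M.R w v})
    (hD_sub : ∀ w, (D w).Subsingleton)
    (hD : ∀ w i, w ∈ M.interp (.dia φ) (e i) → (D w ∩ M.interp φ (e i)).Nonempty) :
    M.IsStrategy (.dia φ) e (C ⊔ D) where
  encard_le w := by
    simp only [Form.numDia, Nat.cast_add, Nat.cast_one]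
    exact (encard_union_le _ _).trans
      (add_le_add (hC.encard_le w) (encard_le_one_iff_subsingleton.2 (hD_sub w)))
  subset_succ w := union_subset (hC.subset_succ w) (hD_succ w)
  preserves {N π} h i x hx := by
    obtain ⟨v, hvD, hvφ⟩ := hD (π x) i hx
    obtain ⟨y, hxy, rfl⟩ := h.lift x v (.inr hvD)
    exact ⟨y, hxy, hC.preserves (h.mono le_sup_left) i hvφ⟩

theorem box (hC : M.IsStrategy φ e C) : M.IsStrategy (.box φ) e C where
  encard_le := hC.encard_le
  subset_succ := hC.subset_succ
  preserves h i x hx y hxy := hC.preserves h i (hx _ (h.forth x y hxy))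

theorem nu {x : ℕ} (hC : M.IsStrategy φ (fun i => update (e i) x (M.interp (.nu x φ) (e i))) C) :
    M.IsStrategy (.nu x φ) e C where
  encard_le := hC.encard_le
  subset_succ := hC.subset_succ
  preserves {N π} h i := by
    have hstep := hC.preserves h i
    rw [comp_update] at hstep
    rw [interp_nu, interp_nu]
    refine OrderHom.le_gfp _ ?_
    calc
      π ⁻¹' (M.bodyHom x φ (e i)).gfp
        = π ⁻¹' M.bodyHom x φ (e i) (M.bodyHom x φ (e i)).gfp := by rw [OrderHom.map_gfp]
      _ ⊆ N.bodyHom x φ (preimage π ∘ e i) (π ⁻¹' (M.bodyHom x φ (e i)).gfp) := hstep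

end

theorem mu {ι : Type*} [LinearOrder ι] [WellFoundedLT ι] {e : ι → ℕ → Set M.W} (he : Monotone e)
    {x : ℕ}
    (hC : M.IsStrategy φ (fun p : ι ×ₗ Ordinal.{0} =>
      update (e (ofLex p).1) x (lfpStage (fun i => M.bodyHom x φ (e i)) p)) C) :
    M.IsStrategy (.mu x φ) e C where
  encard_le := hC.encard_le
  subset_succ := hC.subset_succ
  preserves {N π} h i := by
    have hmono : Monotone fun i => N.bodyHom x φ (preimage π ∘ e i) := fun i j hij =>
      N.monotone_bodyHom x φ fun y => preimage_mono (he hij y)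
    have hstage := map_lfpStage_le_lfp (f := fun i => M.bodyHom x φ (e i)) hmono
      (CompleteLatticeHom.setPreimage π).tosSupHom fun p => by
        have hstep := hC.preserves h p
        rwa [comp_update] at hstep
    obtain ⟨a, ha⟩ := exists_lfp_le_lfpStage (fun i => M.bodyHom x φ (e i)) i
    rw [interp_mu, interp_mu]
    exact (preimage_mono ha).trans (hstage (toLex (i, a)))

end IsStrategy

theorem exists_isStrategy (M : Model) (φ : Form) {ι : Type 1} [LinearOrder ι] [WellFoundedLT ι]
    {e : ι → ℕ → Set M.W} (he : Monotone e) : ∃ C, M.IsStrategy φ e C := by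
  induction φ generalizing ι with
  | pos p => exact ⟨⊥, by simp, by simp, fun h _ x => (h.val_iff x p).2⟩
  | neg p => exact ⟨⊥, by simp, by simp, fun h _ x => mt (h.val_iff x p).1⟩
  | or φ ψ ihφ ihψ =>
    obtain ⟨C, hC⟩ := ihφ he
    obtain ⟨D, hD⟩ := ihψ he
    exact ⟨_, hC.or hD⟩
  | and φ ψ ihφ ihψ =>
    obtain ⟨C, hC⟩ := ihφ he
    obtain ⟨D, hD⟩ := ihψ he
    exact ⟨_, hC.and hD⟩
  | dia φ ih =>
    obtain ⟨C, hC⟩ := ih he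
    choose D hD_succ hD_sub hD using fun w =>
      exists_subsingleton_inter_nonempty_of_monotone ((M.monotone_interp φ).comp he) {v | M.R w v}
    exact ⟨_, hC.dia hD_succ hD_sub hD⟩
  | box φ ih => exact (ih he).imp fun _ hC => hC.box
  | var x => exact ⟨⊥, by simp, by simp, fun _ _ => Subset.rfl⟩
  | mu x φ ih =>
    refine (ih fun p q hpq => ?_).imp fun _ hC => hC.mu he
    exact update_le_update_iff.2
      ⟨monotone_lfpStage _ hpq, fun y _ => he (Prod.Lex.monotone_fst _ _ hpq) y⟩
  | nu x φ ih =>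
    refine (ih fun i j hij => ?_).imp fun _ hC => hC.nu
    exact update_le_update_iff.2 ⟨M.monotone_interp _ (he hij), fun y _ => he hij y⟩

end Model

/-- `IsPlay x₀ D x l`: the list `x :: l` is, in reverse order, a sequence starting in `x₀` whose
step at time `k` goes from the current `y` to an element of `D k y`. -/
inductive IsPlay {X : Type*} (x₀ : X) (D : ℕ → X → Set X) : X → List X → Prop
  | start : IsPlay x₀ D x₀ []
  | move {x y : X} {l : List X} : IsPlay x₀ D x l → y ∈ D l.length x → IsPlay x₀ D y (x :: l)

namespace IsPlay

variable {X : Type*} {x₀ : X} {D D' : ℕ → X → Set X} {n : ℕ} {P : ℕ → X → Prop}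

theorem mem_of_cons {x y : X} {l : List X} : IsPlay x₀ D y (x :: l) → y ∈ D l.length x
  | move _ h => h

theorem invariant (h₀ : P 0 x₀) (hP : ∀ k < n, ∀ x, P k x → ∀ y ∈ D k x, P (k + 1) y) {x : X}
    {l : List X} (hx : IsPlay x₀ D x l) (hl : l.length ≤ n) : P l.length x := by
  induction hx with
  | start => exact h₀
  | move _ hy ih => exact hP _ hl _ (ih (Nat.le_of_succ_le hl)) _ hy

theorem congr (h₀ : P 0 x₀) (hP : ∀ k < n, ∀ x, P k x → ∀ y ∈ D k x, P (k + 1) y)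
    (hD : ∀ k < n, ∀ x, P k x → D k x = D' k x) {x : X} {l : List X} (hx : IsPlay x₀ D x l)
    (hl : l.length ≤ n) : IsPlay x₀ D' x l := by
  induction hx with
  | start => exact .start
  | @move x y l hx hy ih =>
    have hl' := Nat.le_of_succ_le hl
    exact .move (ih hl') (hD _ hl x (hx.invariant h₀ hP hl') ▸ hy)

theorem congr_iff (h₀ : P 0 x₀) (hP : ∀ k < n, ∀ x, P k x → ∀ y ∈ D k x, P (k + 1) y)
    (hD : ∀ k < n, ∀ x, P k x → D k x = D' k x) {x : X} {l : List X} (hl : l.length ≤ n) :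
    IsPlay x₀ D x l ↔ IsPlay x₀ D' x l :=
  ⟨fun hx => hx.congr h₀ hP hD hl, fun hx => hx.congr h₀
    (fun k hk x hx => hD k hk x hx ▸ hP k hk x hx) (fun k hk x hx => (hD k hk x hx).symm) hl⟩

end IsPlay

namespace Model

/-- The tree of plays of `D` from `x₀`, each labelled as its last point in `M`. If `D` does not
depend on time and `π` is the identity, this is the unravelling of a submodel of `M`. -/
def playTree (M : Model) {X : Type} (π : X → M.W) (x₀ : X) (D : ℕ → X → Set X) : Model where
  W := {p : X × List X // IsPlay x₀ D p.1 p.2}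
  root := ⟨(x₀, []), .start⟩
  R p q := q.1.2 = p.1.1 :: p.1.2
  val p := M.val (π p.1.1)

section PlayTree

variable {M : Model} {X : Type} {π : X → M.W} {x₀ : X} {D : ℕ → X → Set X}

theorem playTree_R_iff {p q : (M.playTree π x₀ D).W} :
    (M.playTree π x₀ D).R p q ↔ q.1.2 = p.1.1 :: p.1.2 :=
  Iff.rfl

theorem mem_of_playTree_R {p q : (M.playTree π x₀ D).W} (h : (M.playTree π x₀ D).R p q) :
    q.1.1 ∈ D p.1.2.length p.1.1 := by
  have hq := q.2
  rw [playTree_R_iff.1 h] at hq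
  exact hq.mem_of_cons

theorem stepsTo_playTree_iff {k : ℕ} {p : (M.playTree π x₀ D).W} :
    (M.playTree π x₀ D).stepsTo k p ↔ p.1.2.length = k := by
  constructor
  · intro h
    induction k generalizing p with
    | zero => cases h; rfl
    | succ k ih =>
      obtain ⟨q, hq, hqp⟩ := h
      rw [playTree_R_iff.1 hqp, List.length_cons, ih hq]
  · rintro rfl
    obtain ⟨⟨x, l⟩, hp : IsPlay x₀ D x l⟩ := p
    induction hp with
    | start => rfl
    | move _ _ ih => exact ⟨_, ih, rfl⟩

theorem isTree_playTree : (M.playTree π x₀ D).IsTree := by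
  refine ⟨?_, fun p hp => List.cons_ne_nil _ _ hp.symm, fun p q q' hq hq' => ?_⟩
  · rintro ⟨⟨x, l⟩, hp : IsPlay x₀ D x l⟩
    induction hp with
    | start => exact .refl
    | move _ _ ih => exact ih.tail rfl
  · obtain ⟨hhead, htail⟩ := List.cons.inj (hq.symm.trans hq')
    exact Subtype.ext (Prod.ext hhead htail)

theorem outdegLE_playTree {d : ℕ} (hD : ∀ k x, (D k x).encard ≤ d) :
    (M.playTree π x₀ D).outdegLE d := by
  refine fun p => not_atLeastCard_of_encard_le (le_trans ?_ (hD p.1.2.length p.1.1))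
  refine encard_le_encard_of_injOn (f := fun q => q.1.1) (fun q hq => mem_of_playTree_R hq) ?_
  exact fun q hq q' hq' h => Subtype.ext (Prod.ext h (hq.trans hq'.symm))

theorem follows_playTree {C : M.W → Set M.W} (hC : ∀ k x, C (π x) ⊆ π '' D k x)
    (hM : ∀ k x, π '' D k x ⊆ {v | M.R (π x) v}) :
    Follows (M.playTree π x₀ D) M C fun p => π p.1.1 where
  val_iff _ _ := Iff.rfl
  forth _ _ h := hM _ _ (mem_image_of_mem π (mem_of_playTree_R h))
  lift p v hv := by
    obtain ⟨y, hy, rfl⟩ := hC p.1.2.length p.1.1 hv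
    exact ⟨⟨(y, p.1.1 :: p.1.2), p.2.move hy⟩, rfl, rfl⟩

theorem IsStrategy.sat_playTree {φ : Form} {ι : Type*} [Nonempty ι] {C : M.W → Set M.W}
    (hstrat : M.IsStrategy φ (fun (_ : ι) _ => ∅) C) (hφ : M.Sat φ) (h₀ : π x₀ = M.root)
    (hC : ∀ k x, C (π x) ⊆ π '' D k x) (hM : ∀ k x, π '' D k x ⊆ {v | M.R (π x) v}) :
    (M.playTree π x₀ D).Sat φ := by
  inhabit ι
  have hx₀ : π x₀ ∈ M.interp φ fun _ => ∅ := h₀ ▸ hφ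
  exact hstrat.preserves (follows_playTree hC hM) default hx₀

variable {M' : Model} {π' : X → M'.W} {D' : ℕ → X → Set X} {σ : Set ℕ} {n : ℕ}

theorem isNBisim_playTree
    (hplay : ∀ x l, l.length ≤ n → (IsPlay x₀ D x l ↔ IsPlay x₀ D' x l))
    (hval : ∀ x l, IsPlay x₀ D x l → l.length ≤ n → ∀ p ∈ σ, (M.val (π x) p ↔ M'.val (π' x) p)) :
    IsNBisim (M.playTree π x₀ D) (M'.playTree π' x₀ D') σ n
      fun p p' => p.1 = p'.1 ∧ p.1.2.length ≤ n where
  root := ⟨rfl, Nat.zero_le n⟩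
  depthEq := fun p p' ⟨h, hn⟩ =>
    ⟨_, hn, stepsTo_playTree_iff.2 rfl, stepsTo_playTree_iff.2 (h ▸ rfl)⟩
  base := by
    rintro ⟨⟨x, l⟩, hx⟩ ⟨_, hx'⟩ ⟨rfl, hn⟩
    exact hval x l hx hn
  forth := by
    rintro p p' ⟨h, -⟩ k hk hp q hpq
    have hq : (M.playTree π x₀ D).stepsTo (k + 1) q := ⟨p, hp, hpq⟩
    have hn := (stepsTo_playTree_iff.1 hq).trans_le hk
    exact ⟨⟨q.1, (hplay _ _ hn).1 q.2⟩, hpq.trans (by rw [h]), rfl, hn⟩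
  back := by
    rintro p p' ⟨h, -⟩ k hk hp' q' hpq'
    have hq' : (M'.playTree π' x₀ D').stepsTo (k + 1) q' := ⟨p', hp', hpq'⟩
    have hn := (stepsTo_playTree_iff.1 hq').trans_le hk
    exact ⟨⟨q'.1, (hplay _ _ hn).2 q'.2⟩, hpq'.trans (by rw [h]), rfl, hn⟩

theorem nIsoEq_playTree
    (hplay : ∀ x l, l.length ≤ n → (IsPlay x₀ D x l ↔ IsPlay x₀ D' x l))
    (hval : ∀ x l, IsPlay x₀ D x l → l.length ≤ n → ∀ p ∈ σ, (M.val (π x) p ↔ M'.val (π' x) p)) :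
    NIsoEq (M.playTree π x₀ D) (M'.playTree π' x₀ D') σ n := by
  refine ⟨_, isNBisim_playTree hplay hval, ?_, ?_, ?_, ?_⟩
  · exact fun p q q' h h' => Subtype.ext (h.1.symm.trans h'.1)
  · exact fun p p' q h h' => Subtype.ext (h.1.trans h'.1.symm)
  · rintro p ⟨k, hk, hp⟩
    have hn := (stepsTo_playTree_iff.1 hp).trans_le hk
    exact ⟨⟨p.1, (hplay _ _ hn).1 p.2⟩, rfl, hn⟩
  · rintro p ⟨k, hk, hp⟩
    have hn := (stepsTo_playTree_iff.1 hp).trans_le hk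
    exact ⟨⟨p.1, (hplay _ _ hn).2 p.2⟩, rfl, hn⟩

end PlayTree

end Model

namespace IsNBisim

variable {M M' : Model} {σ : Set ℕ} {n : ℕ} {Z : M.W → M'.W → Prop}

/-- The pair `x` is in the relation `Z`, and both components are reachable in `k` steps. The level
`k` is explicit because a point may be reachable in several numbers of steps. -/
def LinkedAt (Z : M.W → M'.W → Prop) (k : ℕ) (x : M.W × M'.W) : Prop :=
  Z x.1 x.2 ∧ M.stepsTo k x.1 ∧ M'.stepsTo k x.2

theorem exists_linkedAt_forth (hZ : IsNBisim M M' σ n Z) {k : ℕ} (hk : k < n) {x : M.W × M'.W}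
    (hx : LinkedAt Z k x) {v : M.W} (hv : M.R x.1 v) :
    ∃ v', M'.R x.2 v' ∧ LinkedAt Z (k + 1) (v, v') :=
  let ⟨v', hv', hz⟩ := hZ.forth hx.1 k hk hx.2.1 v hv
  ⟨v', hv', hz, ⟨_, hx.2.1, hv⟩, ⟨_, hx.2.2, hv'⟩⟩

theorem exists_linkedAt_back (hZ : IsNBisim M M' σ n Z) {k : ℕ} (hk : k < n) {x : M.W × M'.W}
    (hx : LinkedAt Z k x) {v' : M'.W} (hv' : M'.R x.2 v') :
    ∃ v, M.R x.1 v ∧ LinkedAt Z (k + 1) (v, v') :=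
  let ⟨v, hv, hz⟩ := hZ.back hx.1 k hk hx.2.2 v' hv'
  ⟨v, hv, hz, ⟨_, hx.2.1, hv⟩, ⟨_, hx.2.2, hv'⟩⟩

theorem exists_joint_moves (hZ : IsNBisim M M' σ n Z) {k : ℕ} (hk : k < n) {x : M.W × M'.W}
    (hx : LinkedAt Z k x) {S : Set M.W} {S' : Set M'.W} (hS : S ⊆ {v | M.R x.1 v})
    (hS' : S' ⊆ {v' | M'.R x.2 v'}) :
    ∃ B : Set (M.W × M'.W), (∀ y ∈ B, M.R x.1 y.1 ∧ M'.R x.2 y.2 ∧ LinkedAt Z (k + 1) y) ∧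
      S ⊆ Prod.fst '' B ∧ S' ⊆ Prod.snd '' B ∧ B.encard ≤ S.encard + S'.encard := by
  refine exists_matching (r := fun v v' => M.R x.1 v ∧ M'.R x.2 v' ∧ LinkedAt Z (k + 1) (v, v'))
    (fun v hv => ?_) (fun v' hv' => ?_)
  · exact (hZ.exists_linkedAt_forth hk hx (hS hv)).imp fun _ h => ⟨hS hv, h⟩
  · exact (hZ.exists_linkedAt_back hk hx (hS' hv')).imp fun _ h => ⟨h.1, hS' hv', h.2⟩

theorem exists_moves (hZ : IsNBisim M M' σ n Z) (k : ℕ) (x : M.W × M'.W) {S : Set M.W}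
    {S' : Set M'.W} (hS : S ⊆ {v | M.R x.1 v}) (hS' : S' ⊆ {v' | M'.R x.2 v'}) :
    ∃ D D' : Set (M.W × M'.W),
      (S ⊆ Prod.fst '' D ∧ Prod.fst '' D ⊆ {v | M.R x.1 v} ∧ D.encard ≤ S.encard + S'.encard) ∧
      (S' ⊆ Prod.snd '' D' ∧ Prod.snd '' D' ⊆ {v' | M'.R x.2 v'} ∧
        D'.encard ≤ S.encard + S'.encard) ∧
      (k < n → LinkedAt Z k x → D = D' ∧ ∀ y ∈ D, LinkedAt Z (k + 1) y) := by
  by_cases h : k < n ∧ LinkedAt Z k x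
  · obtain ⟨B, hB, hSB, hSB', hcard⟩ := hZ.exists_joint_moves h.1 h.2 hS hS'
    exact ⟨B, B, ⟨hSB, image_subset_iff.2 fun y hy => (hB y hy).1, hcard⟩,
      ⟨hSB', image_subset_iff.2 fun y hy => (hB y hy).2.1, hcard⟩,
      fun _ _ => ⟨rfl, fun y hy => (hB y hy).2.2⟩⟩
  · have hfst : Prod.fst '' ((·, x.2) '' S) = S := by simp [image_image]
    have hsnd : Prod.snd '' ((x.1, ·) '' S') = S' := by simp [image_image]
    exact ⟨(·, x.2) '' S, (x.1, ·) '' S',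
      ⟨hfst.ge, hfst.trans_subset hS, (encard_image_le _ _).trans le_self_add⟩,
      ⟨hsnd.ge, hsnd.trans_subset hS', (encard_image_le _ _).trans le_add_self⟩,
      fun hk hx => (h ⟨hk, hx⟩).elim⟩

end IsNBisim

open IsNBisim in
theorem NBisimEq.exists_nIsoEq_treeC {φ φ' : Form} {σ : Set ℕ} {n d : ℕ}
    (hd : φ.numDia + φ'.numDia ≤ d) {M M' : Model} (h : NBisimEq M M' σ n) (hφ : M.Sat φ)
    (hφ' : M'.Sat φ') :
    ∃ N ∈ TreeC d, ∃ N' ∈ TreeC d, N.Sat φ ∧ N'.Sat φ' ∧ NIsoEq N N' σ n := by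
  obtain ⟨Z, hZ⟩ := h
  obtain ⟨C, hC⟩ := M.exists_isStrategy φ (e := fun (_ : PUnit) _ => ∅) monotone_const
  obtain ⟨C', hC'⟩ := M'.exists_isStrategy φ' (e := fun (_ : PUnit) _ => ∅) monotone_const
  choose D D' hD hD' hDD' using fun k x =>
    hZ.exists_moves k x (hC.subset_succ x.1) (hC'.subset_succ x.2)
  have hcard (x : M.W × M'.W) : (C x.1).encard + (C' x.2).encard ≤ d :=
    (add_le_add (hC.encard_le x.1) (hC'.encard_le x.2)).trans (mod_cast hd)
  have h₀ : LinkedAt Z 0 (M.root, M'.root) := ⟨hZ.root, rfl, rfl⟩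
  have hD_eq : ∀ k < n, ∀ x, LinkedAt Z k x → D k x = D' k x := fun k hk x hx =>
    (hDD' k x hk hx).1
  have hD_linked : ∀ k < n, ∀ x, LinkedAt Z k x → ∀ y ∈ D k x, LinkedAt Z (k + 1) y :=
    fun k hk x hx => (hDD' k x hk hx).2
  refine ⟨M.playTree Prod.fst (M.root, M'.root) D, ⟨Model.isTree_playTree, ?_⟩,
    M'.playTree Prod.snd (M.root, M'.root) D', ⟨Model.isTree_playTree, ?_⟩, ?_, ?_, ?_⟩
  · exact Model.outdegLE_playTree fun k x => (hD k x).2.2.trans (hcard x)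
  · exact Model.outdegLE_playTree fun k x => (hD' k x).2.2.trans (hcard x)
  · exact hC.sat_playTree hφ rfl (fun k x => (hD k x).1) fun k x => (hD k x).2.1
  · exact hC'.sat_playTree hφ' rfl (fun k x => (hD' k x).1) fun k x => (hD' k x).2.1
  · exact Model.nIsoEq_playTree (fun x l hl => IsPlay.congr_iff h₀ hD_linked hD_eq hl)
      fun x l hx hl => hZ.base (hx.invariant h₀ hD_linked hl).1

theorem stmt_3_general (φ φ' : Form) (σ : Set ℕ) (n : ℕ) {d : ℕ}
    (hd : φ.numDia + φ'.numDia ≤ d) :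
    (∃ M M' : Model, M.Sat φ ∧ M'.Sat φ' ∧ NBisimEq M M' σ n) ↔
    (∃ M ∈ TreeC d, ∃ M' ∈ TreeC d, M.Sat φ ∧ M'.Sat φ' ∧ NIsoEq M M' σ n) := by
  constructor
  · rintro ⟨M, M', hφ, hφ', h⟩
    exact h.exists_nIsoEq_treeC hd hφ hφ'
  · rintro ⟨M, -, M', -, hφ, hφ', Z, hZ, -⟩
    exact ⟨M, M', hφ, hφ', Z, hZ⟩

/-- joint `≈ⁿ_σ`-consistency over all models coincides with joint
`≅ⁿ_σ`-consistency over `T^d` for `d = |φ| + |φ'|`. -/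
theorem stmt_3 (φ φ' : Form) (σ : Set ℕ) (hσ : σ.Finite)
    (h1 : φ.sig ⊆ σ) (h2 : φ'.sig ⊆ σ) (n : ℕ) :
    (∃ M M' : Model, M.Sat φ ∧ M'.Sat φ' ∧ NBisimEq M M' σ n) ↔
    (∃ M ∈ TreeC (φ.size + φ'.size), ∃ M' ∈ TreeC (φ.size + φ'.size),
        M.Sat φ ∧ M'.Sat φ' ∧ NIsoEq M M' σ n) :=
  stmt_3_general φ φ' σ n (Nat.add_le_add φ.numDia_le_size φ'.numDia_le_size)
end

section
/- Let C be either the class of all models or T^2, let A be a nondeterministic parity tree automaton over C (assumed duplication safe in case C = T^2), and let n ∈ ℕ. Then there exists an ML-formula ψ of modal depth at most n such that for every tree M ∈ C: M ⊨ ψ if and only if there exists N ∈ C with N ⊨ A and M ≈^n N. Consequently ψ is an ML^n-uniform consequence of A over C; moreover ψ can be constructed in time |A|^{O(n·|A|)} when C is the class of all models and in time 2^{O(n·|A|)} when C = T^2. -/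
/-- Nondeterministic parity tree automata (NPTA) with alphabet `2^σ`. -/
structure NPTA (σ : Set ℕ) : Type 1 where
  Q : Type
  fin : Fintype Q
  qI : Q
  δ : Q → Set ℕ → Set (List Q)
  rank : Q → ℕ

/-- The number of states of an automaton. -/
def NPTA.card {σ : Set ℕ} (A : NPTA σ) : ℕ := @Fintype.card A.Q A.fin

/-- A run of `A` on `M`: the root gets the initial state, and at every point the
tuple of states of the children is a legal transition for the point's `σ`-letter. -/
def IsRun {σ : Set ℕ} (A : NPTA σ) (M : Model) (ρ : M.W → A.Q) : Prop :=
  ρ M.root = A.qI ∧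
  ∀ w : M.W, ∃ l : List M.W, l.Nodup ∧ (∀ v, v ∈ l ↔ M.R w v) ∧
    l.map ρ ∈ A.δ (ρ w) (σ ∩ {p | M.val w p})

/-- The parity condition: the largest priority occurring infinitely often is even. -/
def ParityGood (r : ℕ → ℕ) : Prop :=
  ∃ m, Even m ∧ (∀ N, ∃ i, N ≤ i ∧ r i = m) ∧ (∀ k, m < k → ∃ N, ∀ i, N ≤ i → r i ≠ k)

/-- Accepting runs: every infinite path satisfies the parity condition. -/
def IsAccRun {σ : Set ℕ} (A : NPTA σ) (M : Model) (ρ : M.W → A.Q) : Prop :=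
  IsRun A M ρ ∧
  ∀ π : ℕ → M.W, (∀ i, M.R (π i) (π (i+1))) → ParityGood fun i => A.rank (ρ (π i))

/-- `M ⊨ A`: `A` has an accepting run on `M`. -/
def SatA {σ : Set ℕ} (M : Model) (A : NPTA σ) : Prop := ∃ ρ, IsAccRun A M ρ

/-- Duplication safety: every singleton transition may be duplicated. -/
def DupSafe {σ : Set ℕ} (A : NPTA σ) : Prop :=
  ∀ q c p, [p] ∈ A.δ q c → [p, p] ∈ A.δ q c

/-- Nondeterministic parity tree automata for trees of unbounded outdegree:
transitions are sets of sets of states. -/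
structure NPTAU (σ : Set ℕ) : Type 1 where
  Q : Type
  fin : Fintype Q
  qI : Q
  δ : Q → Set ℕ → Set (Set Q)
  rank : Q → ℕ

def NPTAU.card {σ : Set ℕ} (A : NPTAU σ) : ℕ := @Fintype.card A.Q A.fin

/-- A run of an unbounded-branching automaton on `M`. -/
def IsRunU {σ : Set ℕ} (A : NPTAU σ) (M : Model) (ρ : M.W → A.Q) : Prop :=
  ρ M.root = A.qI ∧
  ∀ w : M.W, (ρ '' {v | M.R w v}) ∈ A.δ (ρ w) (σ ∩ {p | M.val w p})

def IsAccRunU {σ : Set ℕ} (A : NPTAU σ) (M : Model) (ρ : M.W → A.Q) : Prop :=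
  IsRunU A M ρ ∧
  ∀ π : ℕ → M.W, (∀ i, M.R (π i) (π (i+1))) → ParityGood fun i => A.rank (ρ (π i))

/-- `M ⊨ A` for unbounded-branching automata. -/
def SatU {σ : Set ℕ} (M : Model) (A : NPTAU σ) : Prop := ∃ ρ, IsAccRunU A M ρ

/-!
Fix an automaton and write `M, w ~ₙ q` if the submodel of `M` generated by `w` is bisimilar up to
depth `n` to some tree accepted from the state `q`. A transition can only be used in an accepting
run if each of its states accepts some tree. If the automaton has such a productive transition from
`q` on the letter of `w`, then grafting trees accepted from its states below a fresh root yields a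
tree accepted from `q`, so `M, w ~₀ q`. Moreover `M, w ~ₙ₊₁ q` iff for some productive transition
with set of states `S`, every `p ∈ S` satisfies `M, v ~ₙ p` for some child `v` of `w`, and every
child `v` satisfies `M, v ~ₙ p` for some `p ∈ S`. The cover modality `∇` expresses this in modal
logic, so unfolding the recursion `n` times gives the formula `ψ`.

From right to left one has to build the accepted tree, which may need several copies of a child of
`w` or several copies of a state. Unbounded-branching automata see only the set of states of the
children, which is insensitive to copying. Over `T²` a transition has at most two states and `w` has
at most two children, so the only problematic case is one state facing two children, and this is
what duplication safety is for.
-/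

/-- The fragment `ML^n`: fixpoint-free formulae of modal depth at most `n`. -/
def Form.ML (n : ℕ) : Set Form := {φ | φ.IsML ∧ φ.depth ≤ n}

/-- Bisimilarity up to depth `n` of the points `w` and `v`, over the full signature. Unlike
`IsNBisim` it is a recursive game between arbitrary points and never mentions the roots. -/
def BisimUpTo (M N : Model) : ℕ → M.W → N.W → Prop
  | 0, w, v => ∀ p, M.val w p ↔ N.val v p
  | n + 1, w, v => (∀ p, M.val w p ↔ N.val v p) ∧
      (∀ w', M.R w w' → ∃ v', N.R v v' ∧ BisimUpTo M N n w' v') ∧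
      (∀ v', N.R v v' → ∃ w', M.R w w' ∧ BisimUpTo M N n w' v')

namespace BisimUpTo

variable {M N K : Model} {n : ℕ} {w : M.W} {v : N.W} {u : K.W}

lemma val_iff (h : BisimUpTo M N n w v) (p : ℕ) : M.val w p ↔ N.val v p := by
  cases n with
  | zero => exact h p
  | succ n => exact h.1 p

protected lemma symm (h : BisimUpTo M N n w v) : BisimUpTo N M n v w := by
  induction n generalizing w v with
  | zero => exact fun p => (h p).symm
  | succ n ih =>
    obtain ⟨val, forth, back⟩ := h
    refine ⟨fun p => (val p).symm, fun v' hv' => ?_, fun w' hw' => ?_⟩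
    · exact (back v' hv').imp fun _ => .imp_right ih
    · exact (forth w' hw').imp fun _ => .imp_right ih

protected lemma trans (h : BisimUpTo M N n w v) (h' : BisimUpTo N K n v u) :
    BisimUpTo M K n w u := by
  induction n generalizing w v u with
  | zero => exact fun p => (h p).trans (h' p)
  | succ n ih =>
    obtain ⟨val, forth, back⟩ := h
    obtain ⟨val', forth', back'⟩ := h'
    refine ⟨fun p => (val p).trans (val' p), fun w' hw' => ?_, fun u' hu' => ?_⟩
    · obtain ⟨v', hv', hwv⟩ := forth w' hw'
      obtain ⟨u', hu', hvu⟩ := forth' v' hv'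
      exact ⟨u', hu', ih hwv hvu⟩
    · obtain ⟨v', hv', hvu⟩ := back' u' hu'
      obtain ⟨w', hw', hwv⟩ := back v' hv'
      exact ⟨w', hw', ih hwv hvu⟩

lemma mem_interp_iff {φ : Form} (hφ : φ ∈ Form.ML n) (h : BisimUpTo M N n w v)
    (e : ℕ → Set M.W) (e' : ℕ → Set N.W) : w ∈ M.interp φ e ↔ v ∈ N.interp φ e' := by
  obtain ⟨hML, hd⟩ := hφ
  induction φ generalizing n w v with
  | pos p => exact h.val_iff p
  | neg p => exact not_congr (h.val_iff p)
  | or φ ψ ihφ ihψ =>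
    obtain ⟨hdφ, hdψ⟩ := max_le_iff.1 hd
    exact or_congr (ihφ h hML.1 hdφ) (ihψ h hML.2 hdψ)
  | and φ ψ ihφ ihψ =>
    obtain ⟨hdφ, hdψ⟩ := max_le_iff.1 hd
    exact and_congr (ihφ h hML.1 hdφ) (ihψ h hML.2 hdψ)
  | dia φ ih =>
    obtain _ | n := n
    · exact absurd hd (Nat.not_succ_le_zero _)
    replace hd : φ.depth ≤ n := Nat.le_of_succ_le_succ hd
    obtain ⟨-, forth, back⟩ := h
    constructor
    · rintro ⟨w', hw', hs⟩
      obtain ⟨v', hv', hb⟩ := forth w' hw'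
      exact ⟨v', hv', (ih hb hML hd).1 hs⟩
    · rintro ⟨v', hv', hs⟩
      obtain ⟨w', hw', hb⟩ := back v' hv'
      exact ⟨w', hw', (ih hb hML hd).2 hs⟩
  | box φ ih =>
    obtain _ | n := n
    · exact absurd hd (Nat.not_succ_le_zero _)
    replace hd : φ.depth ≤ n := Nat.le_of_succ_le_succ hd
    obtain ⟨-, forth, back⟩ := h
    constructor
    · intro hs v' hv'
      obtain ⟨w', hw', hb⟩ := back v' hv'
      exact (ih hb hML hd).1 (hs w' hw')
    · intro hs w' hw'
      obtain ⟨v', hv', hb⟩ := forth w' hw'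
      exact (ih hb hML hd).2 (hs v' hv')
  | var | mu | nu => exact hML.elim

end BisimUpTo

lemma Model.IsTree.stepsTo_unique {M : Model} (hM : M.IsTree) {k k' : ℕ} {w : M.W}
    (h : M.stepsTo k w) (h' : M.stepsTo k' w) : k = k' := by
  induction k generalizing k' w with
  | zero =>
    cases h
    cases k' with
    | zero => rfl
    | succ k' => exact (hM.2.1 _ h'.choose_spec.2).elim
  | succ k ih =>
    obtain ⟨v, hv, hR⟩ := h
    cases k' with
    | zero =>
      cases h'
      exact (hM.2.1 v hR).elim
    | succ k' =>
      obtain ⟨v', hv', hR'⟩ := h'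
      cases hM.2.2 _ _ _ hR hR'
      rw [ih hv hv']

namespace NBisimEq

variable {M N : Model} {n : ℕ}

protected lemma refl (M : Model) (σ : Set ℕ) (n : ℕ) : NBisimEq M M σ n := by
  refine ⟨fun w v => w = v ∧ M.InPrefix n w, ⟨rfl, 0, n.zero_le, rfl⟩, ?_, ?_, ?_, ?_⟩
  · rintro w _ ⟨rfl, k, hk, hw⟩
    exact ⟨k, hk, hw, hw⟩
  · rintro w _ ⟨rfl, -⟩ p -
    rfl
  all_goals
    rintro w _ ⟨rfl, -⟩ k hk hw v hv
    exact ⟨v, hv, rfl, k + 1, hk, w, hw, hv⟩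

lemma bisimUpTo (h : NBisimEq M N Set.univ n) : BisimUpTo M N n M.root N.root := by
  obtain ⟨Z, hZ⟩ := h
  suffices H : ∀ j k w v, k + j = n → M.stepsTo k w → N.stepsTo k v → Z w v →
      BisimUpTo M N j w v from H n 0 _ _ (zero_add n) rfl rfl hZ.root
  intro j
  induction j with
  | zero => exact fun k w v _ _ _ h p => hZ.base h p trivial
  | succ j ih =>
    intro k w v hk hw hv h
    refine ⟨fun p => hZ.base h p trivial, fun w' hw' => ?_, fun v' hv' => ?_⟩
    · obtain ⟨v', hv', hz⟩ := hZ.forth h k (by omega) hw w' hw'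
      exact ⟨v', hv', ih (k + 1) _ _ (by omega) ⟨w, hw, hw'⟩ ⟨v, hv, hv'⟩ hz⟩
    · obtain ⟨w', hw', hz⟩ := hZ.back h k (by omega) hv v' hv'
      exact ⟨w', hw', ih (k + 1) _ _ (by omega) ⟨w, hw, hw'⟩ ⟨v, hv, hv'⟩ hz⟩

lemma of_bisimUpTo (hM : M.IsTree) (hN : N.IsTree) (h : BisimUpTo M N n M.root N.root) :
    NBisimEq M N Set.univ n := by
  refine ⟨fun w v => ∃ k j, k + j = n ∧ M.stepsTo k w ∧ N.stepsTo k v ∧ BisimUpTo M N j w v,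
    ⟨0, n, zero_add n, rfl, rfl, h⟩, ?_, ?_, ?_, ?_⟩
  · rintro w v ⟨k, j, rfl, hw, hv, -⟩
    exact ⟨k, by omega, hw, hv⟩
  · rintro w v ⟨_, _, -, -, -, hb⟩ p -
    exact hb.val_iff p
  · rintro w v ⟨k, j, hk, hw, hv, hb⟩ k' hk' hw₂ w' hw'
    cases hM.stepsTo_unique hw hw₂
    obtain _ | j := j
    · omega
    obtain ⟨v', hv', hb'⟩ := hb.2.1 w' hw'
    exact ⟨v', hv', k + 1, j, by omega, ⟨w, hw, hw'⟩, ⟨v, hv, hv'⟩, hb'⟩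
  · rintro w v ⟨k, j, hk, hw, hv, hb⟩ k' hk' hv₂ v' hv'
    cases hN.stepsTo_unique hv hv₂
    obtain _ | j := j
    · omega
    obtain ⟨w', hw', hb'⟩ := hb.2.2 v' hv'
    exact ⟨w', hw', k + 1, j, by omega, ⟨w, hw, hw'⟩, ⟨v, hv, hv'⟩, hb'⟩

lemma sat_iff (h : NBisimEq M N Set.univ n) {θ : Form} (hθ : θ ∈ Form.ML n) :
    M.Sat θ ↔ N.Sat θ :=
  h.bisimUpTo.mem_interp_iff hθ _ _

end NBisimEq

lemma forall_sat_imp_iff_of_sat_iff_nBisimEq {C : Set Model} {P : Model → Prop} {n : ℕ} {ψ : Form}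
    (hψ : ∀ M ∈ C, (M.Sat ψ ↔ ∃ N ∈ C, P N ∧ NBisimEq M N Set.univ n)) {θ : Form}
    (hθ : θ ∈ Form.ML n) :
    (∀ M ∈ C, M.Sat ψ → M.Sat θ) ↔ ∀ M ∈ C, P M → M.Sat θ := by
  refine ⟨fun h M hM hP => h M hM ((hψ M hM).2 ⟨M, hM, hP, .refl M _ n⟩), fun h M hM hsat => ?_⟩
  obtain ⟨N, hN, hP, hMN⟩ := (hψ M hM).1 hsat
  exact (hMN.sat_iff hθ).2 (h N hN hP)

namespace Model

/-- Bounded morphisms (p-morphisms): maps preserving valuations and sending the successor set of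
each point onto that of its image. Roots are ignored. -/
structure IsBoundedMorphism {M N : Model} (g : M.W → N.W) : Prop where
  val_iff : ∀ w p, M.val w p ↔ N.val (g w) p
  succ_eq_image : ∀ w, {v | N.R (g w) v} = g '' {v | M.R w v}

namespace IsBoundedMorphism

variable {M N : Model} {g : M.W → N.W}

lemma bisimUpTo (hg : IsBoundedMorphism g) (n : ℕ) (w : M.W) : BisimUpTo M N n w (g w) := by
  induction n generalizing w with
  | zero => exact hg.val_iff w
  | succ n ih =>
    refine ⟨hg.val_iff w, fun w' hw' => ⟨g w', ?_, ih w'⟩, fun v' hv' => ?_⟩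
    · exact (hg.succ_eq_image w).ge ⟨w', hw', rfl⟩
    · obtain ⟨w', hw', rfl⟩ := (hg.succ_eq_image w).le hv'
      exact ⟨w', hw', ih w'⟩

lemma exists_lift_path (hg : IsBoundedMorphism g) {π : ℕ → N.W}
    (hπ : ∀ i, N.R (π i) (π (i + 1))) (h₀ : π 0 ∈ Set.range g) :
    ∃ π' : ℕ → M.W, (∀ i, M.R (π' i) (π' (i + 1))) ∧ ∀ i, g (π' i) = π i := by
  have hstep : ∀ i (x : {w // g w = π i}), ∃ y : {w // g w = π (i + 1)}, M.R x.1 y.1 := by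
    rintro i ⟨w, hw⟩
    obtain ⟨v, hv, hgv⟩ := (hg.succ_eq_image w).le (hw ▸ hπ i)
    exact ⟨⟨v, hgv⟩, hv⟩
  choose next hnext using hstep
  let lift : ∀ i, {w // g w = π i} := Nat.rec ⟨h₀.choose, h₀.choose_spec⟩ next
  exact ⟨fun i => (lift i).1, fun i => hnext i (lift i), fun i => (lift i).2⟩

end IsBoundedMorphism

/-- The submodel generated by the point `u`. -/
abbrev subtree (M : Model) (u : M.W) : Model where
  W := {v // Relation.ReflTransGen M.R u v}
  root := ⟨u, .refl⟩
  R v v' := M.R v.1 v'.1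
  val v p := M.val v.1 p

lemma isBoundedMorphism_subtree_val (M : Model) (u : M.W) :
    IsBoundedMorphism (M := M.subtree u) (N := M) Subtype.val where
  val_iff _ _ := Iff.rfl
  succ_eq_image w := by
    ext v
    exact ⟨fun h => ⟨⟨v, w.2.tail h⟩, h, rfl⟩, by rintro ⟨v, h, rfl⟩; exact h⟩

lemma IsTree.not_transGen_self {M : Model} (hM : M.IsTree) (w : M.W) :
    ¬ Relation.TransGen M.R w w := by
  induction hM.1 w with
  | refl =>
    intro h
    obtain ⟨v, -, hv⟩ := Relation.TransGen.tail'_iff.1 h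
    exact hM.2.1 v hv
  | tail _ hbc ih =>
    intro h
    obtain ⟨v, hcv, hvc⟩ := Relation.TransGen.tail'_iff.1 h
    cases hM.2.2 _ _ _ hvc hbc
    exact ih (.head' hbc hcv)

lemma IsTree.subtree {M : Model} (hM : M.IsTree) (u : M.W) : (M.subtree u).IsTree := by
  refine ⟨?_, fun w hw => hM.not_transGen_self u (.tail' w.2 hw),
    fun w v v' h h' => Subtype.ext (hM.2.2 _ _ _ h h')⟩
  rintro ⟨w, hw⟩
  induction hw with
  | refl => exact .refl
  | tail _ hbc ih => exact ih.tail hbc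

/-- The accessibility relation of `Model.join`. -/
inductive JoinRel {I : Type} (f : I → Model) :
    Option (Σ i, (f i).W) → Option (Σ i, (f i).W) → Prop
  | root (i : I) {x : (f i).W} : x = (f i).root → JoinRel f none (some ⟨i, x⟩)
  | step (i : I) {x y : (f i).W} : (f i).R x y → JoinRel f (some ⟨i, x⟩) (some ⟨i, y⟩)

/-- The disjoint union of the models `f i` below a fresh root, which is `none`, has valuation `c`,
and has the roots of the `f i` as children. -/
abbrev join {I : Type} (c : ℕ → Prop) (f : I → Model) : Model where
  W := Option (Σ i, (f i).W)
  root := none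
  R := JoinRel f
  val w := w.elim c fun x => (f x.1).val x.2

section Join

variable {I : Type} (c : ℕ → Prop) (f : I → Model)

/-- The inclusion of the component `f i` into a join. -/
abbrev toJoin (i : I) (x : (f i).W) : (join c f).W := some ⟨i, x⟩

lemma toJoin_injective (i : I) : Function.Injective (toJoin c f i) :=
  (Option.some_injective _).comp sigma_mk_injective

lemma isBoundedMorphism_toJoin (i : I) : IsBoundedMorphism (toJoin c f i) where
  val_iff _ _ := Iff.rfl
  succ_eq_image x := by
    ext y
    exact ⟨by rintro (_ | ⟨_, h⟩); exact ⟨_, h, rfl⟩, by rintro ⟨y, h, rfl⟩; exact JoinRel.step i h⟩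

lemma join_succ_root :
    {y | (join c f).R none y} = Set.range fun i => toJoin c f i (f i).root := by
  ext y
  exact ⟨by rintro ⟨i, rfl⟩; exact ⟨i, rfl⟩, by rintro ⟨i, rfl⟩; exact JoinRel.root i rfl⟩

variable {f}

lemma isTree_join (hf : ∀ i, (f i).IsTree) : (join c f).IsTree := by
  refine ⟨?_, by rintro w ⟨⟩, ?_⟩
  · rintro (_ | ⟨i, x⟩)
    · exact .refl
    · induction (hf i).1 x with
      | refl => exact .single (.root i rfl)
      | tail _ hbc ih => exact ih.tail (.step i hbc)
  · rintro w v v' (⟨i, hx⟩ | ⟨i, hxy⟩) (⟨_, hx'⟩ | ⟨_, hxy'⟩)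
    · rfl
    · exact ((hf i).2.1 _ (hx ▸ hxy')).elim
    · exact ((hf i).2.1 _ (hx' ▸ hxy)).elim
    · rw [(hf i).2.2 _ _ _ hxy hxy']

variable {c} in
lemma bisimUpTo_join {M : Model} {n : ℕ} {w : M.W} (hval : ∀ p, M.val w p ↔ c p)
    (forth : ∀ v, M.R w v → ∃ i, BisimUpTo M (f i) n v (f i).root)
    (back : ∀ i, ∃ v, M.R w v ∧ BisimUpTo M (f i) n v (f i).root) :
    BisimUpTo M (join c f) (n + 1) w none := by
  have incl (i : I) := (isBoundedMorphism_toJoin c f i).bisimUpTo n (f i).root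
  refine ⟨hval, fun v hv => ?_, fun y hy => ?_⟩
  · obtain ⟨i, hi⟩ := forth v hv
    exact ⟨_, .root i rfl, hi.trans (incl i)⟩
  · obtain ⟨i, rfl⟩ := hy
    obtain ⟨v, hv, hb⟩ := back i
    exact ⟨v, hv, hb.trans (incl i)⟩

end Join

end Model

namespace Form

/-- The formula `⊤`, which is not a primitive of `Form`. -/
def verum : Form := or (pos 0) (neg 0)

/-- The formula `⊥`, which is not a primitive of `Form`. -/
def falsum : Form := and (pos 0) (neg 0)

/-- The conjunction of the formulae `φ i` for `i ∈ s`, in the arbitrary order of `s.toList`. -/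
noncomputable def conj {ι : Type} (s : Finset ι) (φ : ι → Form) : Form :=
  (s.toList.map φ).foldr and verum

/-- The disjunction of the formulae `φ i` for `i ∈ s`, in the arbitrary order of `s.toList`. -/
noncomputable def disj {ι : Type} (s : Finset ι) (φ : ι → Form) : Form :=
  (s.toList.map φ).foldr or falsum

/-- The cover modality `∇`: every successor satisfies `φ p` for some `p ∈ S`, and every `φ p` with
`p ∈ S` is satisfied by some successor. -/
noncomputable def nabla {ι : Type} (S : Finset ι) (φ : ι → Form) : Form :=
  and (conj S fun p => dia (φ p)) (box (disj S φ))

open Classical in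
/-- The description of a letter `c` of the alphabet `2^s`: exactly the propositions in `c` hold
among those in `s`. -/
noncomputable def letter (s c : Finset ℕ) : Form :=
  conj s fun p => if p ∈ c then pos p else neg p

open Classical in
/-- The disjunction over all letters `c ∈ 2^s` and all `S ∈ T c` of `φ S` together with the
description of `c`: some transition that `T` offers at the current point satisfies `φ`. -/
noncomputable def someTransition {Q : Type} [Fintype Q] (s : Finset ℕ)
    (T : Set ℕ → Set (Finset Q)) (φ : Finset Q → Form) : Form :=
  disj {x ∈ s.powerset ×ˢ (Finset.univ : Finset (Finset Q)) | x.2 ∈ T (x.1 : Set ℕ)}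
    fun x => and (letter s x.1) (φ x.2)

section Semantics

variable {ι Q : Type} [Fintype Q] {M : Model} {e : ℕ → Set M.W} {w : M.W}

lemma mem_interp_verum : w ∈ M.interp verum e := em _

lemma mem_interp_conj {s : Finset ι} {φ : ι → Form} :
    w ∈ M.interp (conj s φ) e ↔ ∀ i ∈ s, w ∈ M.interp (φ i) e := by
  simp only [conj, ← Finset.mem_toList]
  induction s.toList with
  | nil => simp [mem_interp_verum]
  | cons i l ih => simp [Model.interp, ih]

lemma mem_interp_disj {s : Finset ι} {φ : ι → Form} :
    w ∈ M.interp (disj s φ) e ↔ ∃ i ∈ s, w ∈ M.interp (φ i) e := by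
  simp only [disj, ← Finset.mem_toList]
  induction s.toList with
  | nil => simp [falsum, Model.interp]
  | cons i l ih => simp [Model.interp, ih]

lemma mem_interp_nabla {S : Finset ι} {φ : ι → Form} :
    w ∈ M.interp (nabla S φ) e ↔
      (∀ p ∈ S, ∃ v, M.R w v ∧ v ∈ M.interp (φ p) e) ∧
      ∀ v, M.R w v → ∃ p ∈ S, v ∈ M.interp (φ p) e := by
  simp only [nabla, Model.interp, Set.mem_inter_iff, mem_interp_conj, mem_interp_disj,
    Set.mem_ofPred_eq]

lemma mem_interp_letter {s c : Finset ℕ} (hc : c ⊆ s) :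
    w ∈ M.interp (letter s c) e ↔ (c : Set ℕ) = ↑s ∩ {p | M.val w p} := by
  simp only [letter, mem_interp_conj, Set.ext_iff, Set.mem_inter_iff, Finset.mem_coe,
    Set.mem_ofPred_eq]
  refine forall_congr' fun p => ?_
  by_cases hp : p ∈ c
  · simp [hp, hc hp, Model.interp]
  · simp [hp, Model.interp]

lemma mem_interp_someTransition {s : Finset ℕ} {T : Set ℕ → Set (Finset Q)}
    {φ : Finset Q → Form} :
    w ∈ M.interp (someTransition s T φ) e ↔
      ∃ S ∈ T (↑s ∩ {p | M.val w p}), w ∈ M.interp (φ S) e := by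
  classical
  simp only [someTransition, mem_interp_disj, Finset.mem_filter, Finset.mem_product,
    Finset.mem_powerset, Finset.mem_univ, and_true]
  constructor
  · rintro ⟨⟨c, S⟩, ⟨hc, hS⟩, hw, hφ⟩
    exact ⟨S, (mem_interp_letter hc).1 hw ▸ hS, hφ⟩
  · rintro ⟨S, hS, hφ⟩
    have hc : ({p ∈ s | M.val w p} : Finset ℕ) = (↑s ∩ {p | M.val w p} : Set ℕ) := by
      ext p; simp
    have hcs : {p ∈ s | M.val w p} ⊆ s := Finset.filter_subset _ _
    exact ⟨(_, S), ⟨hcs, hc ▸ hS⟩, (mem_interp_letter hcs).2 hc, hφ⟩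

end Semantics

section Fragment

variable {ι Q : Type} [Fintype Q] {n : ℕ}

lemma and_mem_ML {φ ψ : Form} (hφ : φ ∈ ML n) (hψ : ψ ∈ ML n) : and φ ψ ∈ ML n :=
  ⟨⟨hφ.1, hψ.1⟩, max_le hφ.2 hψ.2⟩

lemma or_mem_ML {φ ψ : Form} (hφ : φ ∈ ML n) (hψ : ψ ∈ ML n) : or φ ψ ∈ ML n :=
  ⟨⟨hφ.1, hψ.1⟩, max_le hφ.2 hψ.2⟩

lemma verum_mem_ML (n : ℕ) : verum ∈ ML n :=
  ⟨⟨trivial, trivial⟩, n.zero_le⟩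

lemma conj_mem_ML {s : Finset ι} {φ : ι → Form} (h : ∀ i ∈ s, φ i ∈ ML n) : conj s φ ∈ ML n := by
  simp only [← Finset.mem_toList] at h
  rw [conj]
  generalize s.toList = l at h ⊢
  induction l with
  | nil => exact verum_mem_ML n
  | cons i l ih =>
    rw [List.forall_mem_cons] at h
    exact and_mem_ML h.1 (ih h.2)

lemma disj_mem_ML {s : Finset ι} {φ : ι → Form} (h : ∀ i ∈ s, φ i ∈ ML n) : disj s φ ∈ ML n := by
  simp only [← Finset.mem_toList] at h
  rw [disj]
  generalize s.toList = l at h ⊢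
  induction l with
  | nil => exact ⟨⟨trivial, trivial⟩, n.zero_le⟩
  | cons i l ih =>
    rw [List.forall_mem_cons] at h
    exact or_mem_ML h.1 (ih h.2)

lemma nabla_mem_ML {S : Finset ι} {φ : ι → Form} (h : ∀ p ∈ S, φ p ∈ ML n) :
    nabla S φ ∈ ML (n + 1) :=
  and_mem_ML (conj_mem_ML fun p hp => ⟨(h p hp).1, Nat.succ_le_succ (h p hp).2⟩)
    ⟨(disj_mem_ML h).1, Nat.succ_le_succ (disj_mem_ML h).2⟩

lemma letter_mem_ML (s c : Finset ℕ) (n : ℕ) : letter s c ∈ ML n := by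
  refine conj_mem_ML fun p _ => ?_
  split_ifs <;> exact ⟨trivial, n.zero_le⟩

lemma someTransition_mem_ML (s : Finset ℕ) (T : Set ℕ → Set (Finset Q)) {φ : Finset Q → Form}
    (h : ∀ S, φ S ∈ ML n) : someTransition s T φ ∈ ML n :=
  disj_mem_ML fun x _ => and_mem_ML (letter_mem_ML s x.1 n) (h x.2)

end Fragment

section Size

variable {ι Q : Type} [Fintype Q]

lemma size_conj (s : Finset ι) (φ : ι → Form) :
    (conj s φ).size = 4 + ∑ i ∈ s, ((φ i).size + 1) := by
  rw [conj, ← Finset.sum_map_toList]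
  induction s.toList with
  | nil => rfl
  | cons i l ih => simp only [List.map_cons, List.foldr_cons, List.sum_cons, size, ih]; omega

lemma size_disj (s : Finset ι) (φ : ι → Form) :
    (disj s φ).size = 4 + ∑ i ∈ s, ((φ i).size + 1) := by
  rw [disj, ← Finset.sum_map_toList]
  induction s.toList with
  | nil => rfl
  | cons i l ih => simp only [List.map_cons, List.foldr_cons, List.sum_cons, size, ih]; omega

lemma size_nabla_le (S : Finset ι) {φ : ι → Form} {b : ℕ} (h : ∀ p, (φ p).size ≤ b) :
    (nabla S φ).size ≤ 10 + S.card * (2 * b + 3) := by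
  have hsum : ∑ p ∈ S, ((φ p).size + 1 + 1) + ∑ p ∈ S, ((φ p).size + 1) ≤
      S.card * (2 * b + 3) := by
    rw [← Finset.sum_add_distrib]
    refine Finset.sum_le_card_nsmul S _ _ fun p _ => ?_
    have := h p
    omega
  simp only [nabla, size, size_conj, size_disj]
  omega

lemma size_letter_le (s c : Finset ℕ) : (letter s c).size ≤ 4 + s.card * 3 := by
  rw [letter, size_conj]
  gcongr 4 + ?_
  refine Finset.sum_le_card_nsmul s _ _ fun p _ => ?_
  split_ifs <;> simp [size]

lemma size_someTransition_le (s : Finset ℕ) (T : Set ℕ → Set (Finset Q)) {φ : Finset Q → Form}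
    {b : ℕ} (h : ∀ S, (φ S).size ≤ b) :
    (someTransition s T φ).size ≤ 4 + 2 ^ (Fintype.card Q + s.card) * (6 + 3 * s.card + b) := by
  classical
  have hcard : (s.powerset ×ˢ (Finset.univ : Finset (Finset Q))).card =
      2 ^ (Fintype.card Q + s.card) := by
    rw [Finset.card_product, Finset.card_powerset, Finset.card_univ, Fintype.card_finset, pow_add,
      mul_comm]
  rw [someTransition, size_disj, ← hcard]
  gcongr 4 + ?_
  refine (Finset.sum_le_card_nsmul _ _ (6 + 3 * s.card + b) fun x _ => ?_).trans ?_
  · have hletter := size_letter_le s x.1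
    have hφ := h x.2
    simp only [size]
    omega
  · exact Nat.mul_le_mul_right _ (Finset.card_filter_le _ _)

end Size

end Form

lemma four_add_two_pow_mul_le (k m : ℕ) {b : ℕ} (hb : 1 ≤ b) :
    4 + 2 ^ (m + k) * (6 + 3 * k + (10 + m * (2 * b + 3))) ≤ 2 ^ (5 * (m + k + 1)) * b := by
  have hY : m + k + 1 ≤ 2 ^ (m + k) := Nat.lt_two_pow_self
  have hpow : 2 ^ (5 * (m + k + 1)) = 32 * (2 ^ (m + k)) ^ 5 := by ring
  rw [hpow]
  generalize 2 ^ (m + k) = Y at *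
  have hinner : 6 + 3 * k + (10 + m * (2 * b + 3)) ≤ 16 * (Y * b) := by
    calc _ = 16 + 3 * k + 3 * m + 2 * (m * b) := by ring
      _ ≤ 16 * ((m + k + 1) * b) := by nlinarith
      _ ≤ 16 * (Y * b) := by gcongr
  have hY2 : Y ^ 2 ≤ Y ^ 5 := Nat.pow_le_pow_right (by omega) (by norm_num)
  have hone : 1 ≤ Y ^ 2 * b := Nat.mul_pos (Nat.pow_pos (by omega)) hb
  calc 4 + Y * (6 + 3 * k + (10 + m * (2 * b + 3))) ≤ 4 * (Y ^ 2 * b) + Y * (16 * (Y * b)) := by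
        gcongr; omega
    _ = 20 * Y ^ 2 * b := by ring
    _ ≤ 32 * Y ^ 5 * b := by gcongr; norm_num

section Consequence

variable {Q : Type} [Fintype Q] (s : Finset ℕ) (T : Q → Set ℕ → Set (Finset Q))

/-- The formula `ψ` of the theorem, for the start state `q`. The sets in `T q c` are those of the
states occurring in a transition from `q` on `c`; `M ⊨ ψ` if the first `n` levels of `M` can be
labelled with such transitions. -/
noncomputable def consequence : ℕ → Q → Form
  | 0, q => .someTransition s (T q) fun _ => .verum
  | n + 1, q => .someTransition s (T q) fun S => .nabla S (consequence n)

lemma consequence_mem_ML (n : ℕ) (q : Q) : consequence s T n q ∈ Form.ML n := by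
  induction n generalizing q with
  | zero => exact Form.someTransition_mem_ML s (T q) fun _ => Form.verum_mem_ML 0
  | succ n ih => exact Form.someTransition_mem_ML s (T q) fun _ => Form.nabla_mem_ML fun p _ => ih p

lemma size_consequence_le (n : ℕ) (q : Q) :
    (consequence s T n q).size ≤ 2 ^ (5 * (n + 1) * (Fintype.card Q + s.card + 1)) := by
  induction n generalizing q with
  | zero =>
    have hverum (_ : Finset Q) : Form.verum.size ≤ 10 + Fintype.card Q * (2 * 1 + 3) := by
      simp only [Form.verum, Form.size]; omega
    exact (Form.size_someTransition_le s (T q) hverum).trans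
      ((four_add_two_pow_mul_le s.card (Fintype.card Q) le_rfl).trans_eq (by ring))
  | succ n ih =>
    have hnabla (S : Finset Q) := (Form.size_nabla_le S ih).trans
      (Nat.add_le_add_left (Nat.mul_le_mul_right _ S.card_le_univ) 10)
    refine (Form.size_someTransition_le s (T q) hnabla).trans
      ((four_add_two_pow_mul_le s.card (Fintype.card Q) Nat.one_le_two_pow).trans_eq ?_)
    rw [← pow_add]
    ring

end Consequence

lemma ParityGood.of_tail {r : ℕ → ℕ} (h : ParityGood fun i => r (i + 1)) : ParityGood r := by
  obtain ⟨m, hm, hinf, hfin⟩ := h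
  refine ⟨m, hm, fun N => ?_, fun k hk => ?_⟩
  · obtain ⟨i, hi, hr⟩ := hinf N
    exact ⟨i + 1, by omega, hr⟩
  · obtain ⟨N, hN⟩ := hfin k hk
    refine ⟨N + 1, fun i hi => ?_⟩
    obtain ⟨i, rfl⟩ := Nat.exists_eq_add_of_le' (show 1 ≤ i by omega)
    exact hN i (by omega)

/-- Nondeterministic parity tree automata over the alphabet `2^σ`, without a start state: the common
form of `NPTA` and `NPTAU`. `Admits q c K ρ` says that an automaton in state `q` at a point with
letter `c` may send the states `ρ` to the children of this point, which form the set `K`. -/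
structure ParityTreeAutomaton (σ : Set ℕ) : Type 1 where
  Q : Type
  rank : Q → ℕ
  Admits : Q → Set ℕ → ∀ {W : Type}, Set W → (W → Q) → Prop
  admits_image : ∀ {q : Q} {c : Set ℕ} {V W : Type} {g : V → W}, g.Injective →
    ∀ (K : Set V) (ρ : W → Q), Admits q c (g '' K) ρ ↔ Admits q c K (ρ ∘ g)

namespace ParityTreeAutomaton

variable {σ : Set ℕ} (A : ParityTreeAutomaton σ) {M N : Model} {q : A.Q} {c : Set ℕ}

/-- Accepting runs, starting in an arbitrary state. -/
structure IsAccepting (N : Model) (ρ : N.W → A.Q) : Prop where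
  admits : ∀ w, A.Admits (ρ w) (σ ∩ {p | N.val w p}) {v | N.R w v} ρ
  parity : ∀ π : ℕ → N.W, (∀ i, N.R (π i) (π (i + 1))) → ParityGood fun i => A.rank (ρ (π i))

/-- The tree `N` has an accepting run that starts in state `q`. -/
def Accepts (q : A.Q) (N : Model) : Prop :=
  N.IsTree ∧ ∃ ρ, ρ N.root = q ∧ A.IsAccepting N ρ

variable {A}

lemma admits_succ_iff {g : M.W → N.W} (hg : Model.IsBoundedMorphism g) (hinj : g.Injective)
    (ρ : N.W → A.Q) (w : M.W) :
    A.Admits q (σ ∩ {p | N.val (g w) p}) {v | N.R (g w) v} ρ ↔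
      A.Admits q (σ ∩ {p | M.val w p}) {v | M.R w v} (ρ ∘ g) := by
  simp only [hg.succ_eq_image, A.admits_image hinj, hg.val_iff]

lemma IsAccepting.comp {ρ : N.W → A.Q} (hρ : A.IsAccepting N ρ) {g : M.W → N.W}
    (hg : Model.IsBoundedMorphism g) (hinj : g.Injective) : A.IsAccepting M (ρ ∘ g) where
  admits w := (admits_succ_iff hg hinj ρ w).1 (hρ.admits (g w))
  parity π hπ := hρ.parity (g ∘ π) fun i => (hg.succ_eq_image (π i)).ge ⟨_, hπ i, rfl⟩

lemma admits_univ_subtype {W : Type} {K : Set W} {ρ : W → A.Q} :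
    A.Admits q c Set.univ (fun v : K => ρ v) ↔ A.Admits q c K ρ := by
  have himage := A.admits_image (q := q) (c := c) Subtype.val_injective (Set.univ : Set K) ρ
  rw [Subtype.coe_image_univ] at himage
  exact himage.symm

lemma Accepts.exists_labelling (h : A.Accepts q N) :
    ∃ ρ : N.W → A.Q, A.Admits q (σ ∩ {p | N.val N.root p}) {v | N.R N.root v} ρ ∧
      ∀ v, A.Accepts (ρ v) (N.subtree v) := by
  obtain ⟨hN, ρ, rfl, hρ⟩ := h
  exact ⟨ρ, hρ.admits N.root, fun v => ⟨hN.subtree v, _, rfl,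
    hρ.comp (N.isBoundedMorphism_subtree_val v) Subtype.val_injective⟩⟩

lemma isAccepting_join {I : Type} {f : I → Model} {l : ℕ → Prop} {ρ : (Model.join l f).W → A.Q}
    (hroot : A.Admits (ρ none) (σ ∩ {p | l p}) Set.univ fun i => ρ (Model.toJoin l f i (f i).root))
    (hf : ∀ i, A.IsAccepting (f i) (ρ ∘ Model.toJoin l f i)) :
    A.IsAccepting (Model.join l f) ρ where
  admits
    | none => by
      have hinj : Function.Injective fun i => Model.toJoin l f i (f i).root := fun i j h =>
        congrArg Sigma.fst (Option.some_injective _ h)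
      rwa [Model.join_succ_root, ← Set.image_univ, A.admits_image hinj]
    | some ⟨i, x⟩ => (admits_succ_iff (Model.isBoundedMorphism_toJoin l f i)
        (Model.toJoin_injective l f i) ρ x).2 ((hf i).admits x)
  parity π hπ := by
    have of_mem_range {π : ℕ → (Model.join l f).W}
        (hπ : ∀ i, (Model.join l f).R (π i) (π (i + 1))) {i : I}
        (h₀ : π 0 ∈ Set.range (Model.toJoin l f i)) : ParityGood fun k => A.rank (ρ (π k)) := by
      obtain ⟨π', hπ', hlift⟩ := (Model.isBoundedMorphism_toJoin l f i).exists_lift_path hπ h₀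
      simpa only [Function.comp_apply, hlift] using (hf i).parity π' hπ'
    rcases h₀ : π 0 with _ | ⟨i, x⟩
    · obtain ⟨i, h₁⟩ : π 1 ∈ Set.range fun i => Model.toJoin l f i (f i).root :=
        (Model.join_succ_root l f).le (h₀ ▸ hπ 0)
      exact .of_tail (of_mem_range (fun k => hπ (k + 1)) ⟨_, h₁⟩)
    · exact of_mem_range hπ ⟨x, h₀.symm⟩

lemma accepts_join {I : Type} {st : I → A.Q} {f : I → Model} {l : ℕ → Prop}
    (hst : A.Admits q (σ ∩ {p | l p}) Set.univ st) (hf : ∀ i, A.Accepts (st i) (f i)) :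
    A.Accepts q (Model.join l f) := by
  choose htree ρ hroot hρ using hf
  refine ⟨Model.isTree_join l htree, fun w => w.elim q fun x => ρ x.1 x.2, rfl,
    isAccepting_join ?_ hρ⟩
  simpa only [Option.elim, hroot] using hst

variable (A)

/-- The sets of states occurring in a transition from `q` on `c` that can be part of an accepting
run, because each of its states accepts some tree. -/
def productiveTransitions (q : A.Q) (c : Set ℕ) : Set (Finset A.Q) :=
  {S | ∃ (I : Type) (st : I → A.Q), A.Admits q c Set.univ st ∧ Set.range st = S ∧
    ∀ p ∈ S, ∃ N, A.Accepts p N}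

/-- The submodel generated by `w` is bisimilar up to depth `n` to a tree accepted from `q`. -/
def AcceptsUpTo (M : Model) (n : ℕ) (w : M.W) (q : A.Q) : Prop :=
  ∃ N, A.Accepts q N ∧ BisimUpTo M N n w N.root

/-- Some transition from `q` on `c` can be distributed over `K`: each of its states is sent to a
point of `K` that it is related to by `G`, and every point of `K` receives at least one state. A
point may receive several states, which amounts to replacing it by copies of itself. -/
def AdmitsCover (q : A.Q) (c : Set ℕ) {W : Type} (K : Set W) (G : W → A.Q → Prop) : Prop :=
  ∃ (J : Type) (e : J → W) (st : J → A.Q),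
    A.Admits q c Set.univ st ∧ Set.range e = K ∧ ∀ j, G (e j) (st j)

/-- Duplication safety with respect to a set `K` of children: if a relation `G` between points of
`K` and states relates every point to a state of some transition and every state of this transition
to a point, then some transition can be distributed over `K` along `G`. -/
def DupSafeOn {W : Type} (K : Set W) : Prop :=
  ∀ ⦃q : A.Q⦄ ⦃c : Set ℕ⦄ ⦃I : Type⦄ ⦃st : I → A.Q⦄ ⦃G : W → A.Q → Prop⦄,
    A.Admits q c Set.univ st → (∀ i, ∃ v ∈ K, G v (st i)) → (∀ v ∈ K, ∃ i, G v (st i)) →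
    A.AdmitsCover q c K G

variable {A}

lemma exists_mem_productiveTransitions [Finite A.Q] {W : Type} {K : Set W} {ρ : W → A.Q}
    (hρ : A.Admits q c K ρ) (hacc : ∀ v ∈ K, ∃ N, A.Accepts (ρ v) N) :
    ∃ S ∈ A.productiveTransitions q c, (S : Set A.Q) = ρ '' K := by
  obtain ⟨S, hS⟩ := (Set.toFinite (ρ '' K)).exists_finset_coe
  refine ⟨S, ⟨K, fun v => ρ v, admits_univ_subtype.2 hρ, ?_, fun p hp => ?_⟩, hS⟩
  · rw [hS, Set.image_eq_range]
  · obtain ⟨v, hv, rfl⟩ := hS.le hp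
    exact hacc v hv

lemma acceptsUpTo_zero_iff [Finite A.Q] {w : M.W} :
    A.AcceptsUpTo M 0 w q ↔ (A.productiveTransitions q (σ ∩ {p | M.val w p})).Nonempty := by
  constructor
  · rintro ⟨N, hN, hval⟩
    obtain ⟨ρ, hρ, hacc⟩ := hN.exists_labelling
    simp only [← hval.val_iff] at hρ
    obtain ⟨S, hS, -⟩ := exists_mem_productiveTransitions hρ fun v _ => ⟨_, hacc v⟩
    exact ⟨S, hS⟩
  · rintro ⟨S, I, st, hst, hS, hacc⟩
    choose f hf using fun i => hacc (st i) (hS.le ⟨i, rfl⟩)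
    exact ⟨Model.join (M.val w) f, accepts_join hst hf, fun _ => Iff.rfl⟩

lemma AcceptsUpTo.exists_transition [Finite A.Q] {n : ℕ} {w : M.W}
    (h : A.AcceptsUpTo M (n + 1) w q) :
    ∃ S ∈ A.productiveTransitions q (σ ∩ {p | M.val w p}),
      (∀ p ∈ S, ∃ v, M.R w v ∧ A.AcceptsUpTo M n v p) ∧
      ∀ v, M.R w v → ∃ p ∈ S, A.AcceptsUpTo M n v p := by
  obtain ⟨N, hN, hval, forth, back⟩ := h
  obtain ⟨ρ, hρ, hacc⟩ := hN.exists_labelling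
  simp only [← hval] at hρ
  obtain ⟨S, hS, hSρ⟩ := exists_mem_productiveTransitions hρ fun v _ => ⟨_, hacc v⟩
  have of_bisimUpTo {v : M.W} {v' : N.W} (hb : BisimUpTo M N n v v') :
      A.AcceptsUpTo M n v (ρ v') :=
    ⟨_, hacc v', hb.trans ((N.isBoundedMorphism_subtree_val v').bisimUpTo n ⟨v', .refl⟩).symm⟩
  refine ⟨S, hS, fun p hp => ?_, fun v hv => ?_⟩
  · obtain ⟨v', hv', rfl⟩ := hSρ.le hp
    obtain ⟨v, hv, hb⟩ := back v' hv'
    exact ⟨v, hv, of_bisimUpTo hb⟩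
  · obtain ⟨v', hv', hb⟩ := forth v hv
    exact ⟨ρ v', hSρ.ge ⟨v', hv', rfl⟩, of_bisimUpTo hb⟩

lemma DupSafeOn.acceptsUpTo_succ {n : ℕ} {w : M.W} (hdup : A.DupSafeOn {v | M.R w v})
    {S : Finset A.Q} (hS : S ∈ A.productiveTransitions q (σ ∩ {p | M.val w p}))
    (back : ∀ p ∈ S, ∃ v, M.R w v ∧ A.AcceptsUpTo M n v p)
    (forth : ∀ v, M.R w v → ∃ p ∈ S, A.AcceptsUpTo M n v p) :
    A.AcceptsUpTo M (n + 1) w q := by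
  obtain ⟨I, st, hst, hrange, -⟩ := hS
  obtain ⟨J, e, st', hst', he, hG⟩ := hdup hst (fun i => back (st i) (hrange.le ⟨i, rfl⟩))
    fun v hv => by
      obtain ⟨p, hp, hvp⟩ := forth v hv
      obtain ⟨i, rfl⟩ := hrange.ge hp
      exact ⟨i, hvp⟩
  choose f hf hbisim using hG
  refine ⟨Model.join (M.val w) f, accepts_join hst' hf,
    Model.bisimUpTo_join (fun _ => Iff.rfl) (fun v hv => ?_)
      fun j => ⟨e j, he.le ⟨j, rfl⟩, hbisim j⟩⟩
  obtain ⟨j, rfl⟩ := he.ge hv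
  exact ⟨j, hbisim j⟩

lemma mem_interp_consequence_iff {s : Finset ℕ} {A : ParityTreeAutomaton ↑s} [Fintype A.Q]
    (hdup : ∀ w, A.DupSafeOn {v | M.R w v}) (n : ℕ) (w : M.W) (q : A.Q) (e : ℕ → Set M.W) :
    w ∈ M.interp (consequence s A.productiveTransitions n q) e ↔ A.AcceptsUpTo M n w q := by
  induction n generalizing w q with
  | zero =>
    rw [consequence, Form.mem_interp_someTransition, acceptsUpTo_zero_iff]
    exact exists_congr fun _ => and_iff_left Form.mem_interp_verum
  | succ n ih =>
    simp only [consequence, Form.mem_interp_someTransition, Form.mem_interp_nabla, ih]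
    exact ⟨fun ⟨S, hS, back, forth⟩ => (hdup w).acceptsUpTo_succ hS back forth,
      AcceptsUpTo.exists_transition⟩

lemma acceptsUpTo_root_iff (hM : M.IsTree) {n : ℕ} :
    A.AcceptsUpTo M n M.root q ↔ ∃ N, A.Accepts q N ∧ NBisimEq M N Set.univ n :=
  exists_congr fun _ => and_congr_right fun hN =>
    ⟨.of_bisimUpTo hM hN.1, NBisimEq.bisimUpTo⟩

theorem exists_mem_ML_sat_iff [Fintype A.Q] (hσ : σ.Finite) (q : A.Q) (n : ℕ) :
    ∃ ψ ∈ Form.ML n, ψ.size ≤ 2 ^ (5 * (n + 1) * (Fintype.card A.Q + σ.ncard + 1)) ∧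
      ∀ M : Model, M.IsTree → (∀ w, A.DupSafeOn {v | M.R w v}) →
        (M.Sat ψ ↔ ∃ N, A.Accepts q N ∧ NBisimEq M N Set.univ n) := by
  obtain ⟨s, rfl⟩ := hσ.exists_finset_coe
  refine ⟨consequence s A.productiveTransitions n q, consequence_mem_ML .., ?_, fun M hM hdup => ?_⟩
  · rw [Set.ncard_coe_finset]
    exact size_consequence_le ..
  · exact (mem_interp_consequence_iff hdup n M.root q _).trans (acceptsUpTo_root_iff hM)

end ParityTreeAutomaton

namespace NPTAU

variable {σ : Set ℕ} (A : NPTAU σ)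

/-- An unbounded-branching automaton, without its start state: the states of the children must form
one of the sets in `A.δ q c`. -/
abbrev toParityTreeAutomaton : ParityTreeAutomaton σ where
  Q := A.Q
  rank := A.rank
  Admits q c _ K ρ := ρ '' K ∈ A.δ q c
  admits_image _ K ρ := by rw [Set.image_image]; rfl

variable {A}

lemma accepts_toParityTreeAutomaton_iff {N : Model} :
    A.toParityTreeAutomaton.Accepts A.qI N ↔ N.IsTree ∧ SatU N A :=
  and_congr_right fun _ => exists_congr fun _ =>
    ⟨fun ⟨hroot, hadm, hpar⟩ => ⟨⟨hroot, hadm⟩, hpar⟩,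
      fun ⟨⟨hroot, hadm⟩, hpar⟩ => ⟨hroot, hadm, hpar⟩⟩

lemma dupSafeOn_toParityTreeAutomaton {W : Type} (K : Set W) :
    A.toParityTreeAutomaton.DupSafeOn K := by
  intro q c I st G hst hst_matched hK_matched
  let J : Set (W × A.Q) := {x | x.1 ∈ K ∧ x.2 ∈ Set.range st ∧ G x.1 x.2}
  have hfst : Prod.fst '' J = K := Set.Subset.antisymm (Set.image_subset_iff.2 fun x hx => hx.1)
    fun v hv => by
      obtain ⟨i, hG⟩ := hK_matched v hv
      exact ⟨(v, st i), ⟨hv, ⟨i, rfl⟩, hG⟩, rfl⟩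
  have hsnd : Prod.snd '' J = Set.range st :=
    Set.Subset.antisymm (Set.image_subset_iff.2 fun x hx => hx.2.1) <| Set.range_subset_iff.2
      fun i => by
        obtain ⟨v, hv, hG⟩ := hst_matched i
        exact ⟨(v, st i), ⟨hv, ⟨i, rfl⟩, hG⟩, rfl⟩
  refine ⟨J, fun x => x.1.1, fun x => x.1.2, ParityTreeAutomaton.admits_univ_subtype.2 ?_, ?_,
    fun x => x.2.2.2⟩
  · change Prod.snd '' J ∈ A.δ q c
    rw [hsnd, ← Set.image_univ]
    exact hst
  · rw [← hfst, Set.image_eq_range]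

variable (A) in
theorem exists_mem_ML_sat_iff (hσ : σ.Finite) (n : ℕ) :
    ∃ ψ ∈ Form.ML n, ψ.size ≤ 2 ^ (5 * (n + 1) * (A.card + σ.ncard + 1)) ∧
      ∀ M : Model, M.IsTree →
        (M.Sat ψ ↔ ∃ N : Model, N.IsTree ∧ SatU N A ∧ NBisimEq M N Set.univ n) := by
  let : Fintype A.toParityTreeAutomaton.Q := A.fin
  obtain ⟨ψ, hψ, hsize, hsat⟩ := A.toParityTreeAutomaton.exists_mem_ML_sat_iff hσ A.qI n
  refine ⟨ψ, hψ, hsize, fun M hM => ?_⟩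
  simpa only [accepts_toParityTreeAutomaton_iff, and_assoc] using
    hsat M hM fun _ => dupSafeOn_toParityTreeAutomaton _

end NPTAU

lemma AtLeastCard.le_length {W : Type} {g : ℕ} {K : Set W} (hK : AtLeastCard g K) {l : List W}
    (hl : ∀ v ∈ K, v ∈ l) : g ≤ l.length := by
  classical
  obtain ⟨f, hf, hfK⟩ := hK
  simpa using (List.nodup_ofFn.2 hf).subperm (fun v hv => by
    obtain ⟨i, rfl⟩ := List.mem_ofFn.1 hv
    exact hl _ (hfK i)) |>.length_le

lemma eq_pair_of_not_atLeastCard_three {W : Type} {K : Set W} (hK : ¬ AtLeastCard 3 K) {a b : W}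
    (ha : a ∈ K) (hb : b ∈ K) (hab : a ≠ b) : K = {a, b} := by
  refine Set.Subset.antisymm (fun c hc => ?_) (Set.pair_subset ha hb)
  by_contra! h
  simp only [Set.mem_insert_iff, Set.mem_singleton_iff, not_or] at h
  refine hK ⟨![a, b, c], ?_, ?_⟩
  · intro i j hij
    fin_cases i <;> fin_cases j <;> simp_all [eq_comm]
  · intro i
    fin_cases i <;> assumption

lemma exists_eq_pair_of_not_atLeastCard_three {W : Type} {K : Set W} (hK : ¬ AtLeastCard 3 K)
    {P₁ P₂ : W → Prop} (h₁ : ∃ v ∈ K, P₁ v) (h₂ : ∃ v ∈ K, P₂ v) (h : ∀ v ∈ K, P₁ v ∨ P₂ v) :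
    ∃ v₁ v₂, P₁ v₁ ∧ P₂ v₂ ∧ K = {v₁, v₂} := by
  obtain ⟨a, ha, ha₁⟩ := h₁
  obtain ⟨b, hb, hb₂⟩ := h₂
  by_cases hab : a = b
  · subst hab
    by_cases hKa : K ⊆ {a}
    · exact ⟨a, a, ha₁, hb₂, by simpa using hKa.antisymm (by simpa using ha)⟩
    · obtain ⟨d, hd, hda⟩ := Set.not_subset.1 hKa
      have hKad := eq_pair_of_not_atLeastCard_three hK ha hd (Ne.symm hda)
      obtain hd₁ | hd₂ := h d hd
      · exact ⟨d, a, hd₁, hb₂, by rw [hKad, Set.pair_comm]⟩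
      · exact ⟨a, d, ha₁, hd₂, hKad⟩
  · exact ⟨a, b, ha₁, hb₂, eq_pair_of_not_atLeastCard_three hK ha hb hab⟩

namespace NPTA

variable {σ : Set ℕ} (A : NPTA σ)

/-- An automaton of bounded branching, without its start state: some enumeration of the children
turns their states into one of the tuples in `A.δ q c`. -/
abbrev toParityTreeAutomaton : ParityTreeAutomaton σ where
  Q := A.Q
  rank := A.rank
  Admits q c W K ρ := ∃ l : List W, l.Nodup ∧ (∀ v, v ∈ l ↔ v ∈ K) ∧ l.map ρ ∈ A.δ q c
  admits_image {q c V W g} hg K ρ := by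
    constructor
    · rintro ⟨l, hl, hlK, hδ⟩
      obtain ⟨l, rfl⟩ : l ∈ Set.range (List.map g) := by
        rw [Set.range_list_map]
        exact fun v hv => Set.image_subset_range g K ((hlK v).1 hv)
      refine ⟨l, hl.of_map, fun v => ?_, by simpa using hδ⟩
      rw [← hg.mem_set_image, ← hlK, List.mem_map_of_injective hg]
    · rintro ⟨l, hl, hlK, hδ⟩
      exact ⟨l.map g, hl.map hg, fun v => by simp [hlK], by simpa using hδ⟩

variable {A}

lemma accepts_toParityTreeAutomaton_iff {N : Model} :
    A.toParityTreeAutomaton.Accepts A.qI N ↔ N.IsTree ∧ SatA N A :=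
  and_congr_right fun _ => exists_congr fun _ =>
    ⟨fun ⟨hroot, hadm, hpar⟩ => ⟨⟨hroot, hadm⟩, hpar⟩,
      fun ⟨⟨hroot, hadm⟩, hpar⟩ => ⟨hroot, hadm, hpar⟩⟩

lemma outdegLE_of_satA {d : ℕ} (hδ : ∀ q c l, l ∈ A.δ q c → l.length ≤ d) {N : Model}
    (hN : SatA N A) : N.outdegLE d := by
  obtain ⟨ρ, ⟨-, hrun⟩, -⟩ := hN
  intro w hw
  obtain ⟨l, -, hmem, hl⟩ := hrun w
  have hlt := hw.le_length fun v hv => (hmem v).2 hv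
  have hle := hδ _ _ _ hl
  rw [List.length_map] at hle
  omega

lemma admitsCover_of_pair_mem {W : Type} {K : Set W} (hK : ¬ AtLeastCard 3 K) {q : A.Q} {c : Set ℕ}
    {p₁ p₂ : A.Q} (hp : [p₁, p₂] ∈ A.δ q c) {G : W → A.Q → Prop} (h₁ : ∃ v ∈ K, G v p₁)
    (h₂ : ∃ v ∈ K, G v p₂) (h : ∀ v ∈ K, G v p₁ ∨ G v p₂) :
    A.toParityTreeAutomaton.AdmitsCover q c K G := by
  obtain ⟨v₁, v₂, hv₁, hv₂, rfl⟩ := exists_eq_pair_of_not_atLeastCard_three hK h₁ h₂ h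
  exact ⟨Fin 2, ![v₁, v₂], ![p₁, p₂], ⟨[0, 1], by simp, by simp [Fin.forall_fin_two], hp⟩,
    by simp [Set.pair_comm], by simp [Fin.forall_fin_two, hv₁, hv₂]⟩

lemma dupSafeOn_toParityTreeAutomaton (hδ : ∀ q c l, l ∈ A.δ q c → l.length ≤ 2) (hA : DupSafe A)
    {W : Type} {K : Set W} (hK : ¬ AtLeastCard 3 K) : A.toParityTreeAutomaton.DupSafeOn K := by
  rintro q c I st G ⟨l, -, hlI, hl⟩ hst_matched hK_matched
  replace hlI (i : I) : i ∈ l := (hlI i).2 trivial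
  match l, hl with
  | [], hl =>
    have : IsEmpty I := ⟨fun i => List.not_mem_nil (hlI i)⟩
    refine ⟨I, isEmptyElim, st, ⟨[], .nil, by simp, hl⟩, ?_, isEmptyElim⟩
    rw [Set.range_eq_empty, eq_comm, Set.eq_empty_iff_forall_notMem]
    exact fun v hv => isEmptyElim (hK_matched v hv).choose
  | [i], hl =>
    refine admitsCover_of_pair_mem hK (hA q c _ hl) (hst_matched i) (hst_matched i) fun v hv => ?_
    obtain ⟨j, hj⟩ := hK_matched v hv
    obtain rfl : j = i := by simpa using hlI j
    exact .inl hj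
  | [i₁, i₂], hl =>
    refine admitsCover_of_pair_mem hK hl (hst_matched i₁) (hst_matched i₂) fun v hv => ?_
    obtain ⟨j, hj⟩ := hK_matched v hv
    obtain rfl | rfl : j = i₁ ∨ j = i₂ := by simpa using hlI j
    · exact .inl hj
    · exact .inr hj
  | _ :: _ :: _ :: _, hl =>
    have := hδ _ _ _ hl
    simp at this

theorem exists_mem_ML_sat_iff (hσ : σ.Finite) (hδ : ∀ q c l, l ∈ A.δ q c → l.length ≤ 2)
    (hA : DupSafe A) (n : ℕ) :
    ∃ ψ ∈ Form.ML n, ψ.size ≤ 2 ^ (5 * (n + 1) * (A.card + σ.ncard + 1)) ∧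
      ∀ M ∈ TreeC 2, (M.Sat ψ ↔ ∃ N ∈ TreeC 2, SatA N A ∧ NBisimEq M N Set.univ n) := by
  let : Fintype A.toParityTreeAutomaton.Q := A.fin
  obtain ⟨ψ, hψ, hsize, hsat⟩ := A.toParityTreeAutomaton.exists_mem_ML_sat_iff hσ A.qI n
  refine ⟨ψ, hψ, hsize, fun M hM => ?_⟩
  rw [hsat M hM.1 fun w => dupSafeOn_toParityTreeAutomaton hδ hA (hM.2 w)]
  refine exists_congr fun N => ?_
  rw [accepts_toParityTreeAutomaton_iff, ← and_assoc]
  exact and_congr_left' (and_congr_left fun hN => (and_iff_left (outdegLE_of_satA hδ hN)).symm)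

end NPTA

/-- construction of `ML^n`-uniform consequences of an NPTA, over the class of
all (tree) models and over `T^2` (for duplication safe automata); the constructed formula
`ψ` satisfies `M ⊨ ψ  iff  ∃ N ∈ C, N ⊨ A and M ≈ⁿ N`, and its size is at most
`|A|^{O(n·|A|)}` resp. `2^{O(n·|A|)}` (measuring the automaton together with its alphabet). -/
theorem stmt_5 : ∃ c : ℕ,
    (∀ (σ : Set ℕ), σ.Finite → ∀ (A : NPTAU σ) (n : ℕ),
      ∃ ψ : Form, ψ.IsML ∧ ψ.depth ≤ n ∧
        ψ.size ≤ (A.card + σ.ncard + 2) ^ (c * (n + 1) * (A.card + σ.ncard + 1)) ∧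
        (∀ M : Model, M.IsTree →
          (M.Sat ψ ↔ ∃ N : Model, N.IsTree ∧ SatU N A ∧ NBisimEq M N Set.univ n)) ∧
        (∀ θ : Form, θ.IsML → θ.depth ≤ n →
          ((∀ M : Model, M.IsTree → M.Sat ψ → M.Sat θ) ↔
           (∀ M : Model, M.IsTree → SatU M A → M.Sat θ)))) ∧
    (∀ (σ : Set ℕ), σ.Finite → ∀ (A : NPTA σ),
      (∀ q ch l, l ∈ A.δ q ch → l.length ≤ 2) → DupSafe A → ∀ n : ℕ,
      ∃ ψ : Form, ψ.IsML ∧ ψ.depth ≤ n ∧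
        ψ.size ≤ 2 ^ (c * (n + 1) * (A.card + σ.ncard + 1)) ∧
        (∀ M ∈ TreeC 2, (M.Sat ψ ↔ ∃ N ∈ TreeC 2, SatA N A ∧ NBisimEq M N Set.univ n)) ∧
        (∀ θ : Form, θ.IsML → θ.depth ≤ n →
          ((∀ M ∈ TreeC 2, M.Sat ψ → M.Sat θ) ↔
           (∀ M ∈ TreeC 2, SatA M A → M.Sat θ)))) := by
  refine ⟨5, fun σ hσ A n => ?_, fun σ hσ A hδ hA n => ?_⟩
  · obtain ⟨ψ, hψ, hsize, hsat⟩ := A.exists_mem_ML_sat_iff hσ n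
    exact ⟨ψ, hψ.1, hψ.2, hsize.trans (Nat.pow_le_pow_left (by omega) _), hsat, fun θ hML hd =>
      forall_sat_imp_iff_of_sat_iff_nBisimEq (C := {M | M.IsTree}) hsat ⟨hML, hd⟩⟩
  · obtain ⟨ψ, hψ, hsize, hsat⟩ := NPTA.exists_mem_ML_sat_iff hσ hδ hA n
    exact ⟨ψ, hψ.1, hψ.2, hsize, hsat, fun θ hML hd =>
      forall_sat_imp_iff_of_sat_iff_nBisimEq hsat ⟨hML, hd⟩⟩
end

section
/- Let M and M' be full binary trees (every point is either a leaf or has exactly two successors) and let σ be a signature. If M and M' are σ-bisimilar then they are σ-isomorphic; in fact, every bisimulation Z between the σ-reducts of M and M' contains a bijective bisimulation Z' ⊆ Z. -/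
/-- (Unbounded) `σ`-bisimulations between trees: they link the roots, relate only points of
equal depth, and satisfy the base (w.r.t. `σ`), forth and back conditions. -/
structure IsSigBisim (M M' : Model) (σ : Set ℕ) (Z : M.W → M'.W → Prop) : Prop where
  root : Z M.root M'.root
  depthEq : ∀ ⦃w w'⦄, Z w w' → ∃ k, M.stepsTo k w ∧ M'.stepsTo k w'
  base : ∀ ⦃w w'⦄, Z w w' → ∀ p ∈ σ, (M.val w p ↔ M'.val w' p)
  forth : ∀ ⦃w w'⦄, Z w w' → ∀ v, M.R w v → ∃ v', M'.R w' v' ∧ Z v v'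
  back : ∀ ⦃w w'⦄, Z w w' → ∀ v', M'.R w' v' → ∃ v, M.R w v ∧ Z v v'

/-- Full binary trees: every point is a leaf or has exactly two successors. -/
def IsFullBinary (M : Model) : Prop :=
  ∀ w : M.W, (∀ v, ¬ M.R w v) ∨
    ∃ v₁ v₂, v₁ ≠ v₂ ∧ M.R w v₁ ∧ M.R w v₂ ∧ ∀ v, M.R w v → v = v₁ ∨ v = v₂

/-- A relation is bijective: functional, injective, total and surjective. -/
def BijRel {α β : Type} (Z : α → β → Prop) : Prop :=
  (∀ a b₁ b₂, Z a b₁ → Z a b₂ → b₁ = b₂) ∧ (∀ a₁ a₂ b, Z a₁ b → Z a₂ b → a₁ = a₂) ∧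
  (∀ a, ∃ b, Z a b) ∧ (∀ b, ∃ a, Z a b)

/-! A `σ`-bisimulation `Z` restricts to a relation between the successors of `w` and those of `w'`,
for every related pair `(w, w')`, in which nobody is left without a partner. Between two
two-element sets such a relation contains a bijection: if neither the parallel nor the crossed
pairing were contained in it, some point would have no partner. Choosing one bijection for every
related pair and following these choices from the roots gives the bijective bisimulation; no
conflicts arise because a point of a tree is reached along only one path. -/

theorem exists_equiv_pair {α β : Type*} {Z : α → β → Prop} {a₁ a₂ : α} {b₁ b₂ : β}
    (ha : a₁ ≠ a₂) (hb : b₁ ≠ b₂)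
    (forth : ∀ a ∈ ({a₁, a₂} : Set α), ∃ b ∈ ({b₁, b₂} : Set β), Z a b)
    (back : ∀ b ∈ ({b₁, b₂} : Set β), ∃ a ∈ ({a₁, a₂} : Set α), Z a b) :
    ∃ e : ({a₁, a₂} : Set α) ≃ ({b₁, b₂} : Set β), ∀ a : ({a₁, a₂} : Set α), Z a (e a) := by
  classical
  have parallel_or_crossed : (Z a₁ b₁ ∧ Z a₂ b₂) ∨ (Z a₁ b₂ ∧ Z a₂ b₁) := by
    simp only [Set.mem_insert_iff, Set.mem_singleton_iff, forall_eq_or_imp, forall_eq,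
      exists_eq_or_imp, exists_eq_left] at forth back
    tauto
  clear forth back
  wlog parallel : Z a₁ b₁ ∧ Z a₂ b₂ generalizing b₁ b₂
  · rw [Set.pair_comm b₁ b₂]
    exact this hb.symm parallel_or_crossed.symm (parallel_or_crossed.resolve_left parallel)
  obtain ⟨f, rfl, rfl⟩ : ∃ f : α → β, f a₁ = b₁ ∧ f a₂ = b₂ :=
    ⟨Function.update (fun _ => b₂) a₁ b₁, Function.update_self .., Function.update_of_ne ha.symm ..⟩
  have bijOn : Set.BijOn f {a₁, a₂} {f a₁, f a₂} := by
    rw [← Set.image_pair]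
    exact (Set.injOn_pair.2 fun h => (hb h).elim).bijOn_image
  refine ⟨bijOn.equiv f, ?_⟩
  rintro ⟨a, rfl | rfl⟩
  exacts [parallel.1, parallel.2]

/-- The successors of a point, as a set. -/
def Model.successors (M : Model) (w : M.W) : Set M.W := {v | M.R w v}

theorem IsFullBinary.successors_eq_empty_or_pair {M : Model} (hM : IsFullBinary M) (w : M.W) :
    M.successors w = ∅ ∨ ∃ v₁ v₂, v₁ ≠ v₂ ∧ M.successors w = {v₁, v₂} := by
  rcases hM w with leaf | ⟨v₁, v₂, hne, h₁, h₂, h⟩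
  · exact .inl (Set.eq_empty_of_forall_notMem leaf)
  · refine .inr ⟨v₁, v₂, hne, Set.Subset.antisymm h ?_⟩
    rintro v (rfl | rfl)
    exacts [h₁, h₂]

/-- The relation between two models generated by linking the roots and then following, from each
linked pair of points, a given bijection `e` between their successors. The bijections are indexed
by the pairs in a relation `Z`, which in the application is a bisimulation. -/
inductive MatchingClosure {M M' : Model} {Z : M.W → M'.W → Prop}
    (e : ∀ ⦃w w'⦄, Z w w' → M.successors w ≃ M'.successors w') : M.W → M'.W → Prop
  | root : MatchingClosure e M.root M'.root
  | step {w w' v v'} (h : MatchingClosure e w w') (hZ : Z w w') (hv : v ∈ M.successors w)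
      (hv' : v' ∈ M'.successors w') (he : e hZ ⟨v, hv⟩ = ⟨v', hv'⟩) : MatchingClosure e v v'

namespace MatchingClosure

variable {M M' : Model} {Z : M.W → M'.W → Prop}
  {e : ∀ ⦃w w'⦄, Z w w' → M.successors w ≃ M'.successors w'}

protected theorem flip {w : M.W} {w' : M'.W} (h : MatchingClosure e w w') :
    MatchingClosure (Z := flip Z) (fun _ _ hZ => (e hZ).symm) w' w := by
  induction h with
  | root => exact .root
  | step _ hZ hv hv' he ih => exact ih.step hZ hv' hv ((e hZ).symm_apply_eq.2 he.symm)

theorem rightUnique (root_minimal : ∀ w, ¬ M.R w M.root)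
    (parent_unique : ∀ w v v', M.R v w → M.R v' w → v = v') :
    Relator.RightUnique (MatchingClosure e) := by
  intro v v₁' v₂' h₁ h₂
  induction h₁ generalizing v₂' with
  | root =>
    generalize hr : M.root = r at h₂
    cases h₂ with
    | root => rfl
    | step _ _ hv => exact (root_minimal _ (hr ▸ hv)).elim
  | step _ _ hv _ he ih =>
    cases h₂ with
    | root => exact (root_minimal _ hv).elim
    | step h₂ _ hu _ he₂ =>
      obtain rfl := parent_unique _ _ _ hv hu
      obtain rfl := ih h₂
      exact congrArg Subtype.val (he.symm.trans he₂)

theorem leftUnique (root_minimal : ∀ w', ¬ M'.R w' M'.root)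
    (parent_unique : ∀ w v v', M'.R v w → M'.R v' w → v = v') :
    Relator.LeftUnique (MatchingClosure e) :=
  fun _ _ _ h₁ h₂ => rightUnique root_minimal parent_unique h₁.flip h₂.flip

theorem le (root : Z M.root M'.root)
    (he : ∀ ⦃w w'⦄ (h : Z w w') (v : M.successors w), Z v (e h v)) :
    MatchingClosure e ≤ Z := by
  intro w w' h
  induction h with
  | root => exact root
  | step _ hZ hv _ hvv' _ => simpa only [hvv'] using he hZ ⟨_, hv⟩

theorem isSigBisim {σ : Set ℕ} (hZ : IsSigBisim M M' σ Z)
    (he : ∀ ⦃w w'⦄ (h : Z w w') (v : M.successors w), Z v (e h v)) :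
    IsSigBisim M M' σ (MatchingClosure e) where
  root := .root
  depthEq _ _ h := hZ.depthEq (le hZ.root he _ _ h)
  base _ _ h := hZ.base (le hZ.root he _ _ h)
  forth w w' h v hv :=
    have related : Z w w' := le hZ.root he _ _ h
    let v' := e related ⟨v, hv⟩
    ⟨v', v'.2, h.step related hv v'.2 rfl⟩
  back w w' h v' hv' :=
    have related : Z w w' := le hZ.root he _ _ h
    let v := (e related).symm ⟨v', hv'⟩
    ⟨v, v.2, h.step related v.2 hv' ((e related).apply_symm_apply _)⟩

end MatchingClosure

namespace IsSigBisim

variable {M M' : Model} {σ : Set ℕ} {Z : M.W → M'.W → Prop}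

protected theorem flip (hZ : IsSigBisim M M' σ Z) : IsSigBisim M' M σ (flip Z) where
  root := hZ.root
  depthEq _ _ h := (hZ.depthEq h).imp fun _ => And.symm
  base _ _ h p hp := (hZ.base h p hp).symm
  forth _ _ h := hZ.back h
  back _ _ h := hZ.forth h

theorem leftTotal (hZ : IsSigBisim M M' σ Z)
    (reachable : ∀ w, Relation.ReflTransGen M.R M.root w) : Relator.LeftTotal Z := by
  intro w
  induction reachable w with
  | refl => exact ⟨_, hZ.root⟩
  | tail _ hv ih =>
    obtain ⟨w', h⟩ := ih
    obtain ⟨v', -, h'⟩ := hZ.forth h _ hv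
    exact ⟨v', h'⟩

theorem rightTotal (hZ : IsSigBisim M M' σ Z)
    (reachable : ∀ w', Relation.ReflTransGen M'.R M'.root w') : Relator.RightTotal Z :=
  hZ.flip.leftTotal reachable

theorem exists_le_bijRel_of_successors_equiv (hM : M.IsTree) (hM' : M'.IsTree)
    (hZ : IsSigBisim M M' σ Z)
    (matching : ∀ ⦃w w'⦄, Z w w' →
      ∃ e : M.successors w ≃ M'.successors w', ∀ v : M.successors w, Z v (e v)) :
    ∃ Z' ≤ Z, IsSigBisim M M' σ Z' ∧ BijRel Z' := by
  obtain ⟨reachable, root_minimal, parent_unique⟩ := hM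
  obtain ⟨reachable', root_minimal', parent_unique'⟩ := hM'
  choose e he using matching
  have bisim : IsSigBisim M M' σ (MatchingClosure e) := MatchingClosure.isSigBisim hZ he
  exact ⟨MatchingClosure e, MatchingClosure.le hZ.root he, bisim,
    fun _ _ _ h₁ h₂ => MatchingClosure.rightUnique root_minimal parent_unique h₁ h₂,
    fun _ _ _ h₁ h₂ => MatchingClosure.leftUnique root_minimal' parent_unique' h₁ h₂,
    bisim.leftTotal reachable, bisim.rightTotal reachable'⟩

theorem exists_successors_equiv (hZ : IsSigBisim M M' σ Z) (hfb : IsFullBinary M)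
    (hfb' : IsFullBinary M') {w : M.W} {w' : M'.W} (h : Z w w') :
    ∃ e : M.successors w ≃ M'.successors w', ∀ v : M.successors w, Z v (e v) := by
  have forth : ∀ v ∈ M.successors w, ∃ v' ∈ M'.successors w', Z v v' := hZ.forth h
  have back : ∀ v' ∈ M'.successors w', ∃ v ∈ M.successors w, Z v v' := hZ.back h
  rcases hfb.successors_eq_empty_or_pair w with hw | ⟨v₁, v₂, hv, hw⟩ <;>
    rcases hfb'.successors_eq_empty_or_pair w' with hw' | ⟨v₁', v₂', hv', hw'⟩ <;>
    rw [hw, hw'] at forth back ⊢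
  case inl.inl => exact ⟨Equiv.equivOfIsEmpty _ _, isEmptyElim⟩
  case inl.inr => simpa using back v₁'
  case inr.inl => simpa using forth v₁
  case inr.inr => exact exists_equiv_pair hv hv' forth back

end IsSigBisim

/-- between full binary trees, every `σ`-bisimulation contains a bijective
`σ`-bisimulation; in particular `σ`-bisimilar full binary trees are `σ`-isomorphic. -/
theorem stmt_7 (M M' : Model) (σ : Set ℕ) (hM : M.IsTree) (hM' : M'.IsTree)
    (hfb : IsFullBinary M) (hfb' : IsFullBinary M') :
    (∀ Z, IsSigBisim M M' σ Z →
      ∃ Z', (∀ w w', Z' w w' → Z w w') ∧ IsSigBisim M M' σ Z' ∧ BijRel Z') ∧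
    ((∃ Z, IsSigBisim M M' σ Z) → ∃ Z, IsSigBisim M M' σ Z ∧ BijRel Z) := by
  have contains_bijective (Z) (hZ : IsSigBisim M M' σ Z) :
      ∃ Z' ≤ Z, IsSigBisim M M' σ Z' ∧ BijRel Z' :=
    hZ.exists_le_bijRel_of_successors_equiv hM hM' fun _ _ => hZ.exists_successors_equiv hfb hfb'
  refine ⟨contains_bijective, ?_⟩
  rintro ⟨Z, hZ⟩
  obtain ⟨Z', -, hZ'⟩ := contains_bijective Z hZ
  exact ⟨Z', hZ'⟩
end
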